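/- Let X be a standard Borel space, E a countable Borel equivalence relation on X, ρ : E → (0,∞) a Borel cocycle, and A ⊆ X an E-complete Borel set. Then X is the union of: an E-invariant Borel set B for which the restriction of ρ to E restricted to B is smooth; an E-invariant Borel set C for which A ∩ C has σ-positive (ρ restricted to E|C)-density; and an E-invariant Borel set D for which there is a finite-to-one Borel compression of the quotient of ρ restricted to E|D by a finite Borel subequivalence relation of E|D. -/

import Mathlib

open MeasureTheory Set ENNReal

namespace CocycleNadkarni

variable {X : Type*} {Γ : Type*}

/-- The `ρ`-size of `Y` relative to the point `z`: `∑_{y ∈ Y} ρ(y, z)`. -/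
noncomputable def eSize (ρ : X → X → ℝ) (Y : Set X) (z : X) : ℝ≥0∞ :=
  ∑' y : Y, ENNReal.ofReal (ρ y z)

/-- The `ρ`-size of `Y` relative to the set `Z`, computed at the point `z`. -/
noncomputable def relSize (ρ : X → X → ℝ) (Y Z : Set X) (z : X) : ℝ≥0∞ :=
  eSize ρ Y z / eSize ρ Z z

/-- Real-valued `ρ`-size (used for finite sets). -/
noncomputable def rSize (ρ : X → X → ℝ) (Y : Set X) (z : X) : ℝ :=
  ∑' y : Y, ρ y z

/-- `∫_C f dμ^ρ_S`, computed at the point `z`. -/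
noncomputable def avgOn (ρ : X → X → ℝ) (f : X → ℝ) (S C : Set X) (z : X) : ℝ :=
  (∑' y : ↥(S ∩ C), f y * ρ y z) / rSize ρ S z

/-- countable Borel equivalence relation -/
def IsCBER [MeasurableSpace X] (E : X → X → Prop) : Prop :=
  Equivalence E ∧ MeasurableSet {p : X × X | E p.1 p.2} ∧ ∀ x : X, {y | E x y}.Countable

/-- Borel cocycle `ρ : E → (0, ∞)` (as a total function whose values off `E` are irrelevant). -/
def IsCocycle [MeasurableSpace X] (E : X → X → Prop) (ρ : X → X → ℝ) : Prop :=
  Measurable (fun p : X × X => ρ p.1 p.2) ∧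
    (∀ ⦃x y : X⦄, E x y → 0 < ρ x y) ∧
    ∀ ⦃x y z : X⦄, E x y → E y z → ρ x z = ρ x y * ρ y z

/-- Borel cocycle into a group `Γ`. -/
def IsGrpCocycle [MeasurableSpace X] [Group Γ] [MeasurableSpace Γ]
    (E : X → X → Prop) (ρ : X → X → Γ) : Prop :=
  Measurable (fun p : X × X => ρ p.1 p.2) ∧
    ∀ ⦃x y z : X⦄, E x y → E y z → ρ x z = ρ x y * ρ y z

/-- finite Borel subequivalence relation of `E` -/
def IsFinSubequiv [MeasurableSpace X] (E F : X → X → Prop) : Prop :=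
  Equivalence F ∧ MeasurableSet {p : X × X | F p.1 p.2} ∧
    (∀ ⦃x y : X⦄, F x y → E x y) ∧ ∀ x : X, {y | F x y}.Finite

/-- finite Borel subequivalence relation of `E` restricted to `W` (extended by the diagonal). -/
def IsFinSubequivOn [MeasurableSpace X] (E : X → X → Prop) (W : Set X)
    (F : X → X → Prop) : Prop :=
  Equivalence F ∧ MeasurableSet {p : X × X | F p.1 p.2} ∧
    (∀ ⦃x y : X⦄, F x y → x = y ∨ (E x y ∧ x ∈ W ∧ y ∈ W)) ∧ ∀ x : X, {y | F x y}.Finite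

/-- `ρ`-invariance of a Borel measure. -/
def IsInvariant [MeasurableSpace X] (E : X → X → Prop) (ρ : X → X → ℝ)
    (μ : Measure X) : Prop :=
  ∀ T : X ≃ᵐ X, (∀ x, E (T x) x) → ∀ B : Set X, MeasurableSet B →
    μ (T '' B) = ∫⁻ x in B, ENNReal.ofReal (ρ (T x) x) ∂μ

/-- invariance w.r.t. the restriction of `ρ` to a set `R` of pairs, via Borel injections
whose graphs are contained in `R⁻¹`. -/
def IsInvariantRel [MeasurableSpace X] (R : Set (X × X)) (ρ : X → X → ℝ)
    (μ : Measure X) : Prop :=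
  ∀ (B : Set X) (T : X → X), MeasurableSet B → Measurable T → Set.InjOn T B →
    (∀ x ∈ B, ((T x, x) : X × X) ∈ R) →
    μ (T '' B) = ∫⁻ x in B, ENNReal.ofReal (ρ (T x) x) ∂μ

/-- a Borel ℕ-coloring of the lacunarity digraph `G^ρ_Z`. -/
def HasColoring [MeasurableSpace X] (E : X → X → Prop) (ρ : X → X → Γ)
    (Z : Set Γ) : Prop :=
  ∃ c : X → ℕ, Measurable c ∧
    ∀ ⦃x y : X⦄, x ≠ y → E x y → ρ x y ∈ Z → c x ≠ c y

/-- smoothness of the cocycle `ρ` restricted to `E` restricted to `W`. -/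
def SmoothOn [MeasurableSpace X] (E : X → X → Prop) (ρ : X → X → ℝ)
    (W : Set X) : Prop :=
  ∃ U : Set ℝ, IsOpen U ∧ (1:ℝ) ∈ U ∧ U ⊆ Set.Ioi 0 ∧
    ∃ c : X → ℕ, Measurable c ∧
      ∀ ⦃x y : X⦄, x ∈ W → y ∈ W → x ≠ y → E x y → ρ x y ∈ U → c x ≠ c y

/-- smoothness of the cocycle `ρ` on `E`. -/
def Smooth [MeasurableSpace X] (E : X → X → Prop) (ρ : X → X → ℝ) : Prop :=
  SmoothOn E ρ Set.univ

/-- `E`-invariance of a set. -/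
def EInvariant (E : X → X → Prop) (B : Set X) : Prop :=
  ∀ ⦃x y : X⦄, E x y → x ∈ B → y ∈ B

/-- a compression of `ρ` over the finite subequivalence relation `F` of `E`. -/
def CompressionOver [MeasurableSpace X] (E F : X → X → Prop) (ρ : X → X → ℝ)
    (φ : X → X) : Prop :=
  (∀ x, E x (φ x)) ∧
  (∀ x : X, relSize ρ (φ ⁻¹' {y | F y x}) {y | F y x} x ≤ 1) ∧
  (∀ x : X, ∃ y, E x y ∧ relSize ρ (φ ⁻¹' {z | F z y}) {z | F z y} y < 1)

/-- a compression of the quotient of `ρ | E | W` by the finite subequivalence relation given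
by the setoid `s`, expressed via representatives. -/
def QuotCompressionOn [MeasurableSpace X] (E : X → X → Prop) (ρ : X → X → ℝ)
    (W : Set X) (s : Setoid X) (φ : Quotient s → Quotient s) : Prop :=
  (∀ ⦃x : X⦄, x ∈ W → ∀ y : X, φ (Quotient.mk s x) = Quotient.mk s y → (E x y ∧ y ∈ W)) ∧
  (∀ ⦃x : X⦄, x ∈ W →
    relSize ρ {y | y ∈ W ∧ φ (Quotient.mk s y) = Quotient.mk s x} {y | s.r y x} x ≤ 1) ∧
  (∀ ⦃x : X⦄, x ∈ W → ∃ y, y ∈ W ∧ E x y ∧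
    relSize ρ {z | z ∈ W ∧ φ (Quotient.mk s z) = Quotient.mk s y} {z | s.r z y} y < 1)


/-- `B` has `ρ`-density at least `ε` relative to `W`. -/
def HasDensityAtLeastOn [MeasurableSpace X] (E : X → X → Prop) (ρ : X → X → ℝ)
    (B W : Set X) (ε : ℝ) : Prop :=
  ∃ F : X → X → Prop, IsFinSubequivOn E W F ∧
    ∀ x ∈ W, ENNReal.ofReal ε ≤ relSize ρ (B ∩ {y | F y x}) {y | F y x} x

/-- `B` has positive `ρ`-density relative to `W`. -/
def HasPosDensityOn [MeasurableSpace X] (E : X → X → Prop) (ρ : X → X → ℝ)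
    (B W : Set X) : Prop :=
  ∃ ε : ℝ, 0 < ε ∧ HasDensityAtLeastOn E ρ B W ε

/-- `B` has σ-positive `ρ`-density relative to `W`. -/
def HasSigmaPosDensityOn [MeasurableSpace X] (E : X → X → Prop) (ρ : X → X → ℝ)
    (B W : Set X) : Prop :=
  ∃ A : ℕ → Set X, (∀ n, MeasurableSet (A n)) ∧ (∀ n, A n ⊆ W) ∧
    (∀ n, ∀ x ∈ A n, ∀ y ∈ W, E x y → y ∈ A n) ∧ W = ⋃ n, A n ∧
    ∀ n, HasPosDensityOn E ρ (B ∩ A n) (A n)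

/-!
Let `G 0` be equality on `A`, and let the classes of `G (n + 1)` be a maximal disjoint family of
balanced sets: finite sets saturated under `G n` in which the points outside the domain of `G n`
have at least the size, and at most twice the size, of the points inside. By induction `A` has
density at least `3⁻ⁿ` in every class of `G n`.

Where the domains of the `G n` increase, pushing each layer into the next one, inside the classes of
the `G n`, is a compression, since the outer part of a balanced set is at least as large as its
inner part. Elsewhere some class of `G n` misses the domain of `G (n + 1)`. By maximality, the
leftover points outside the domain of `G n` can be distributed over the leftover classes of `G n`
so that no class receives more than its own size, and then `A` still has density at least
`3⁻⁽ⁿ⁺¹⁾`. This fails only on `E`-classes in which some Borel set has positive finite size, and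
there the cocycle is smooth.
-/

/-! ### Lusin–Novikov uniformization -/

section LusinNovikov

open TopologicalSpace Function Filter Topology

/-- `N` is a countable union of measurable sets on each of which `f` is injective; these are the
sets that the Lusin–Novikov argument treats as negligible. -/
def IsSigmaInjective {Z Y : Type*} [MeasurableSpace Z] (f : Z → Y) (N : Set Z) : Prop :=
  ∃ 𝒢 : Set (Set Z), 𝒢.Countable ∧ (∀ G ∈ 𝒢, MeasurableSet G ∧ InjOn f G) ∧ ⋃₀ 𝒢 = N

/-- The families of points `z i ∈ u i`, `i ∈ s`, that lie in a common fiber of `f`. -/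
def fiberTuples {Z Y κ : Type*} (f : Z → Y) (s : Set κ) (u : κ → Set Z) : Set (κ → Z) :=
  {z | (∀ i ∈ s, z i ∈ u i) ∧ ∀ i ∈ s, ∀ j ∈ s, f (z i) = f (z j)}

/-- Every fiber tuple of `u` over `s` has a coordinate in one fixed `σ`-injective set. -/
def IsNegligible {Z Y κ : Type*} [MeasurableSpace Z] (f : Z → Y) (s : Set κ) (u : κ → Set Z) :
    Prop :=
  ∃ N, IsSigmaInjective f N ∧ ∀ z ∈ fiberTuples f s u, ∃ i ∈ s, z i ∈ N

/-- `V` and `W` are disjoint open sets of diameter at most `ε` whose closures are contained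
in `U`: one splitting step of a Cantor scheme. -/
structure IsSplitting {Z : Type*} [PseudoEMetricSpace Z] (ε : ℝ≥0∞) (U V W : Set Z) : Prop where
  isOpen_left : IsOpen V
  isOpen_right : IsOpen W
  closure_left : closure V ⊆ U
  closure_right : closure W ⊆ U
  disjoint : Disjoint V W
  ediam_left : Metric.ediam V ≤ ε
  ediam_right : Metric.ediam W ≤ ε

section SigmaInjective

variable {Z Y κ : Type*} {f : Z → Y}

theorem update_mem_fiberTuples [DecidableEq κ] {s : Set κ} {v : κ → Set Z} {a b : κ}
    (ha : a ∈ s) (hab : a ≠ b) {z : κ → Z} (hz : z ∈ fiberTuples f s v)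
    {w : Z} (hw : f (z a) = f w) {V W : Set Z} (hV : z a ∈ V) (hW : w ∈ W) :
    update z b w ∈ fiberTuples f s (update (update v a V) b W) := by
  have hval (i) (hi : i ∈ s) : f (update z b w i) = f (z a) := by
    rcases eq_or_ne i b with rfl | hib
    · rw [update_self, hw]
    · rw [update_of_ne hib, hz.2 i hi a ha]
  refine ⟨fun i hi => ?_, fun i hi j hj => by rw [hval i hi, hval j hj]⟩
  rcases eq_or_ne i b with rfl | hib
  · simpa only [update_self] using hW
  rw [update_of_ne hib, update_of_ne hib]
  rcases eq_or_ne i a with rfl | hia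
  · simpa only [update_self] using hV
  · rw [update_of_ne hia]
    exact hz.1 i hi

variable [MeasurableSpace Z]

theorem isSigmaInjective_empty : IsSigmaInjective f ∅ :=
  ⟨∅, countable_empty, by simp, sUnion_empty⟩

theorem IsSigmaInjective.measurableSet {N : Set Z} (hN : IsSigmaInjective f N) :
    MeasurableSet N := by
  obtain ⟨𝒢, hc, hG, rfl⟩ := hN
  exact MeasurableSet.sUnion hc fun G h => (hG G h).1

theorem isSigmaInjective_iUnion {ι : Type*} [Countable ι] {N : ι → Set Z}
    (hN : ∀ i, IsSigmaInjective f (N i)) : IsSigmaInjective f (⋃ i, N i) := by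
  choose 𝒢 hc hG hu using hN
  refine ⟨⋃ i, 𝒢 i, countable_iUnion hc, fun G h => ?_, ?_⟩
  · obtain ⟨i, hi⟩ := mem_iUnion.1 h
    exact hG i G hi
  · rw [sUnion_iUnion, iUnion_congr hu]

theorem IsSigmaInjective.union_of_injOn {N G : Set Z} (hN : IsSigmaInjective f N)
    (hG : MeasurableSet G) (hi : InjOn f G) : IsSigmaInjective f (G ∪ N) := by
  obtain ⟨𝒢, hc, h𝒢, rfl⟩ := hN
  refine ⟨insert G 𝒢, hc.insert G, ?_, sUnion_insert G 𝒢⟩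
  rintro _ (rfl | h)
  exacts [⟨hG, hi⟩, h𝒢 _ h]

theorem measurableSet_fiberTuples [TopologicalSpace Y] [PolishSpace Y] [MeasurableSpace Y]
    [BorelSpace Y] (hf : Measurable f) {s : Set κ} (hs : s.Countable) {v : κ → Set Z}
    (hv : ∀ i ∈ s, MeasurableSet (v i)) : MeasurableSet (fiberTuples f s v) := by
  have heq : fiberTuples f s v = (⋂ i ∈ s, eval i ⁻¹' v i) ∩
      ⋂ i ∈ s, ⋂ j ∈ s, {z : κ → Z | f (z i) = f (z j)} := by
    ext z
    simp [fiberTuples]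
  rw [heq]
  exact .inter (.biInter hs fun i hi => measurable_pi_apply i (hv i hi))
    (.biInter hs fun i _ => .biInter hs fun j _ => measurableSet_eq_fun
      (hf.comp (measurable_pi_apply i)) (hf.comp (measurable_pi_apply j)))

theorem fiberTuples_nonempty_of_not_isNegligible {s : Set κ} {u : κ → Set Z}
    (h : ¬ IsNegligible f s u) : (fiberTuples f s u).Nonempty := by
  rw [nonempty_iff_ne_empty]
  exact fun h0 => h ⟨∅, isSigmaInjective_empty, by simp [h0]⟩

/-- A Borel set `G` as required consists of the points `z` such that, for every `p` in a countable
separating family, `z ∈ p` iff `f z` lies in a Borel set separating the images under `f` of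
`g '' t ∩ p` and `g '' t \ p`. -/
theorem exists_measurableSet_injOn_superset [MeasurableSpace.CountablySeparated Z] {T : Type*}
    [MeasurableSpace T] [StandardBorelSpace T] [TopologicalSpace Y] [PolishSpace Y]
    [MeasurableSpace Y] [BorelSpace Y] (hf : Measurable f) {g : T → Z} (hg : Measurable g)
    {t : Set T} (ht : MeasurableSet t) (hi : InjOn f (g '' t)) :
    ∃ G, MeasurableSet G ∧ InjOn f G ∧ g '' t ⊆ G := by
  obtain ⟨p, hp, hsep⟩ :=
    exists_seq_separating Z (p := MeasurableSet) MeasurableSet.empty univ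
  have hM (n : ℕ) : ∃ M, MeasurableSet M ∧ ∀ z ∈ g '' t, z ∈ p n ↔ f z ∈ M := by
    have hdisj : Disjoint ((f ∘ g) '' (t ∩ g ⁻¹' p n)) ((f ∘ g) '' (t ∩ (g ⁻¹' p n)ᶜ)) := by
      rw [disjoint_left]
      rintro _ ⟨z, ⟨hz, hzp⟩, rfl⟩ ⟨w, ⟨hw, hwp⟩, he⟩
      rw [mem_compl_iff, mem_preimage, hi (mem_image_of_mem g hw) (mem_image_of_mem g hz) he] at hwp
      exact hwp hzp
    obtain ⟨M, hin, hout, hM⟩ :=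
      ((ht.inter (hg (hp n))).analyticSet_image (hf.comp hg)).measurablySeparable
        ((ht.inter (hg (hp n)).compl).analyticSet_image (hf.comp hg)) hdisj
    refine ⟨M, hM, ?_⟩
    rintro _ ⟨z, hz, rfl⟩
    refine ⟨fun h => hin ⟨z, ⟨hz, h⟩, rfl⟩, fun h => ?_⟩
    by_contra hzp
    exact disjoint_left.1 hout ⟨z, ⟨hz, hzp⟩, rfl⟩ h
  choose M hM hsepM using hM
  refine ⟨{z | ∀ n, z ∈ p n ↔ f z ∈ M n}, ?_, fun z hz w hw he => ?_, fun z hz n => hsepM n z hz⟩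
  · exact measurableSet_setOfPred.2 (.forall fun n => (hp n).mem.iff ((hM n).mem.comp hf))
  · exact hsep z trivial w trivial fun n => by rw [hz n, hw n, he]

end SigmaInjective

section Splitting

variable {Z Y κ : Type*} [MetricSpace Z] [SecondCountableTopology Z] {f : Z → Y} {s : Set κ}
  {v : κ → Set Z} {a b : κ} {ε : ℝ≥0∞}

theorem exists_basis_isSplitting {O : Set Z} (hO : IsOpen O) {z w : Z} (hz : z ∈ O) (hw : w ∈ O)
    (hzw : z ≠ w) (hε : ε ≠ 0) :
    ∃ V ∈ countableBasis Z, ∃ W ∈ countableBasis Z, z ∈ V ∧ w ∈ W ∧ IsSplitting ε O V W := by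
  have hbasis {x : Z} {U : Set Z} (hU : IsOpen U) (hxU : x ∈ U) (hxO : x ∈ O) :
      ∃ V ∈ countableBasis Z, x ∈ V ∧ V ⊆ U ∧ closure V ⊆ O ∧ Metric.ediam V ≤ ε := by
    obtain ⟨V, hV, hxV, hsub⟩ := (isBasis_countableBasis Z).exists_closure_subset
      (((hU.inter hO).inter Metric.isOpen_eball).mem_nhds
        ⟨⟨hxU, hxO⟩, Metric.mem_eball_self (ENNReal.half_pos hε)⟩)
    refine ⟨V, hV, hxV, fun y hy => (hsub (subset_closure hy)).1.1, fun y hy => (hsub hy).1.2, ?_⟩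
    calc Metric.ediam V ≤ Metric.ediam (Metric.eball x (ε / 2)) :=
          Metric.ediam_mono fun y hy => (hsub (subset_closure hy)).2
      _ ≤ 2 * (ε / 2) := Metric.ediam_eball_le
      _ = ε := ENNReal.mul_div_cancel two_ne_zero ofNat_ne_top
  obtain ⟨U, U', hU, hU', hzU, hwU, hd⟩ := t2_separation hzw
  obtain ⟨V, hV, hzV, hVU, hVO, hVε⟩ := hbasis hU hzU hz
  obtain ⟨W, hW, hwW, hWU, hWO, hWε⟩ := hbasis hU' hwU hw
  exact ⟨V, hV, W, hW, hzV, hwW, isOpen_of_mem_countableBasis hV, isOpen_of_mem_countableBasis hW,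
    hVO, hWO, hd.mono hVU hWU, hVε, hWε⟩

variable [DecidableEq κ]

theorem injOn_eval_fiberTuples (ha : a ∈ s) (hab : a ≠ b) (hva : IsOpen (v a)) (hε : ε ≠ 0)
    {N : Set Z} (hN : ∀ V ∈ countableBasis Z, ∀ W ∈ countableBasis Z, IsSplitting ε (v a) V W →
      ∀ z ∈ fiberTuples f s (update (update v a V) b W), ∃ i ∈ s, z i ∈ N) :
    InjOn f (eval a '' {z ∈ fiberTuples f s v | ∀ i ∈ s, z i ∉ N}) := by
  rintro _ ⟨z, ⟨hz, hzN⟩, rfl⟩ _ ⟨w, ⟨hw, hwN⟩, rfl⟩ he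
  by_contra hne
  obtain ⟨V, hV, W, hW, hzV, hwW, hVW⟩ :=
    exists_basis_isSplitting hva (hz.1 a ha) (hw.1 a ha) hne hε
  obtain ⟨i, hi, hiN⟩ := hN V hV W hW hVW _ (update_mem_fiberTuples ha hab hz he hzV hwW)
  rcases eq_or_ne i b with rfl | hib
  · rw [update_self] at hiN
    exact hwN a ha hiN
  · rw [update_of_ne hib] at hiN
    exact hzN i hi hiN

variable [MeasurableSpace Z] [BorelSpace Z] [TopologicalSpace Y] [PolishSpace Y]
  [MeasurableSpace Y] [BorelSpace Y]

/-- If all ways of splitting a doubled coordinate are negligible, then the tuples that avoid the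
(countably many) witnesses have at most one possible value of that coordinate per fiber. -/
theorem isNegligible_of_forall_isSplitting [CompleteSpace Z] [Countable κ] (hf : Measurable f)
    (ha : a ∈ s) (hab : a ≠ b) (hv : ∀ i ∈ s, IsOpen (v i)) (hε : ε ≠ 0)
    (h : ∀ V W, IsSplitting ε (v a) V W → IsNegligible f s (update (update v a V) b W)) :
    IsNegligible f s v := by
  have hN (p : countableBasis Z × countableBasis Z) : ∃ N, IsSigmaInjective f N ∧
      (IsSplitting ε (v a) p.1.1 p.2.1 →
        ∀ z ∈ fiberTuples f s (update (update v a p.1.1) b p.2.1), ∃ i ∈ s, z i ∈ N) := by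
    by_cases hp : IsSplitting ε (v a) p.1.1 p.2.1
    · obtain ⟨N, hN, hcov⟩ := h _ _ hp
      exact ⟨N, hN, fun _ => hcov⟩
    · exact ⟨∅, isSigmaInjective_empty, fun hp' => absurd hp' hp⟩
  choose N hN hcov using hN
  have hU : IsSigmaInjective f (⋃ p, N p) := isSigmaInjective_iUnion hN
  have hinj : InjOn f (eval a '' {z ∈ fiberTuples f s v | ∀ i ∈ s, z i ∉ ⋃ p, N p}) := by
    refine injOn_eval_fiberTuples (b := b) ha hab (hv a ha) hε fun V hV W hW hVW z hz => ?_
    obtain ⟨i, hi, hiN⟩ := hcov (⟨V, hV⟩, ⟨W, hW⟩) hVW z hz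
    exact ⟨i, hi, mem_iUnion.2 ⟨_, hiN⟩⟩
  have hmeas : MeasurableSet {z ∈ fiberTuples f s v | ∀ i ∈ s, z i ∉ ⋃ p, N p} := by
    have havoid : {z ∈ fiberTuples f s v | ∀ i ∈ s, z i ∉ ⋃ p, N p} =
        fiberTuples f s v ∩ ⋂ i ∈ s, eval i ⁻¹' (⋃ p, N p)ᶜ := by
      ext z
      simp
    rw [havoid]
    exact (measurableSet_fiberTuples hf s.to_countable fun i hi => (hv i hi).measurableSet).inter
      (.biInter s.to_countable fun i _ => measurable_pi_apply i hU.measurableSet.compl)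
  obtain ⟨G, hG, hGi, hsub⟩ :=
    exists_measurableSet_injOn_superset hf (measurable_pi_apply a) hmeas hinj
  refine ⟨G ∪ ⋃ p, N p, hU.union_of_injOn hG hGi, fun z hz => ?_⟩
  by_cases hzN : ∀ i ∈ s, z i ∉ ⋃ p, N p
  · exact ⟨a, ha, Or.inl (hsub ⟨z, ⟨hz, hzN⟩, rfl⟩)⟩
  · push Not at hzN
    obtain ⟨i, hi, hiN⟩ := hzN
    exact ⟨i, hi, Or.inr hiN⟩

end Splitting

section Scheme

variable {Z Y : Type*} {f : Z → Y}

/-- The `n`-th level of the binary tree that indexes a Cantor scheme. -/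
abbrev binaryWords (n : ℕ) : Set (List Bool) := {l | l.length = n}

theorem isNegligible_of_tail [MeasurableSpace Z] {n : ℕ} {u : List Bool → Set Z}
    (h : IsNegligible f (binaryWords (n + 1)) fun l => u l.tail) :
    IsNegligible f (binaryWords n) u := by
  obtain ⟨N, hN, hcov⟩ := h
  have htail : ∀ l ∈ binaryWords (n + 1), l.tail ∈ binaryWords n := fun l hl => by
    simpa using congrArg Nat.pred hl
  refine ⟨N, hN, fun z hz => ?_⟩
  obtain ⟨l, hl, hlN⟩ := hcov (fun l => z l.tail) ⟨fun l hl => hz.1 _ (htail l hl),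
    fun l hl l' hl' => hz.2 _ (htail l hl) _ (htail l' hl')⟩
  exact ⟨l.tail, htail l hl, hlN⟩

theorem injective_const_of_cantorScheme [MetricSpace Z] [CompleteSpace Z] [TopologicalSpace Y]
    [T2Space Y] (hf : Continuous f) {A : List Bool → Set Z}
    (hanti : CantorScheme.ClosureAntitone A) (hdisj : CantorScheme.Disjoint A)
    (hdiam : CantorScheme.VanishingDiam A)
    (htup : ∀ n, (fiberTuples f (binaryWords n) A).Nonempty) :
    ∃ φ : (ℕ → Bool) → Z, Injective φ ∧ ∀ x y, f (φ x) = f (φ y) := by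
  choose z hzA hzf using htup
  have hdom := hanti.map_of_vanishingDiam hdiam fun l => ⟨z l.length l, hzA _ l rfl⟩
  let φ : (ℕ → Bool) → Z := fun x => (CantorScheme.inducedMap A).2 ⟨x, hdom ▸ mem_univ x⟩
  have hlim (x : ℕ → Bool) : Tendsto (fun n => z n (PiNat.res x n)) atTop (𝓝 (φ x)) := by
    rw [tendsto_iff_edist_tendsto_0]
    refine tendsto_of_tendsto_of_tendsto_of_le_of_le tendsto_const_nhds (hdiam x)
      (fun n => zero_le) (fun n => ?_)
    exact Metric.edist_le_ediam_of_mem (hzA n _ (PiNat.res_length x n))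
      (CantorScheme.map_mem _ n)
  refine ⟨φ, fun x y hxy => congrArg Subtype.val (hdisj.map_injective hxy), fun x y => ?_⟩
  refine tendsto_nhds_unique ((hf.tendsto _).comp (hlim x))
    (((hf.tendsto _).comp (hlim y)).congr fun n => ?_)
  exact hzf n _ (PiNat.res_length y n) _ (PiNat.res_length x n)

variable [MetricSpace Z] [CompleteSpace Z] [SecondCountableTopology Z] [MeasurableSpace Z]
  [BorelSpace Z] [TopologicalSpace Y] [PolishSpace Y] [MeasurableSpace Y] [BorelSpace Y]

/-- The leaves of length `n` are split one at a time, starting from the family in which both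
children of `l` still carry the set `u l`. -/
theorem exists_isSplitting_of_not_isNegligible (hf : Measurable f) {n : ℕ}
    {u : List Bool → Set Z} (hu : ∀ l ∈ binaryWords n, IsOpen (u l))
    (hneg : ¬ IsNegligible f (binaryWords n) u) {ε : ℝ≥0∞} (hε : ε ≠ 0) :
    ∃ v : List Bool → Set Z, ¬ IsNegligible f (binaryWords (n + 1)) v ∧
      ∀ l ∈ binaryWords n, IsSplitting ε (u l) (v (true :: l)) (v (false :: l)) := by
  suffices hpartial : ∀ t : Finset (List Bool), (∀ l ∈ t, l.length = n) →
      ∃ v : List Bool → Set Z, ¬ IsNegligible f (binaryWords (n + 1)) v ∧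
        (∀ l ∈ t, IsSplitting ε (u l) (v (true :: l)) (v (false :: l))) ∧
        ∀ l ∉ t, ∀ b, v (b :: l) = u l by
    obtain ⟨v, hv, hsplit, -⟩ := hpartial (List.finite_length_eq Bool n).toFinset (by simp)
    exact ⟨v, hv, fun l hl => hsplit l ((List.finite_length_eq Bool n).mem_toFinset.2 hl)⟩
  intro t
  induction t using Finset.induction_on with
  | empty => exact fun _ => ⟨fun l => u l.tail, mt isNegligible_of_tail hneg, by simp, by simp⟩
  | insert l t hlt ih =>
    intro hlen
    obtain ⟨v, hv, hsplit, hrest⟩ := ih fun l' hl' => hlen l' (Finset.mem_insert_of_mem hl')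
    have hopen : ∀ l' ∈ binaryWords (n + 1), IsOpen (v l') := by
      rintro (_ | ⟨b, l'⟩) hl'
      · simp at hl'
      by_cases hmem : l' ∈ t
      · cases b
        exacts [(hsplit l' hmem).isOpen_right, (hsplit l' hmem).isOpen_left]
      · rw [hrest l' hmem]
        exact hu l' (by simpa using hl')
    have hsplit_l : ∃ V W, IsSplitting ε (v (true :: l)) V W ∧ ¬ IsNegligible f
        (binaryWords (n + 1)) (update (update v (true :: l) V) (false :: l) W) := by
      by_contra! hcon
      exact hv (isNegligible_of_forall_isSplitting hf (by simpa using hlen l (by simp)) (by simp)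
        hopen hε hcon)
    obtain ⟨V, W, hVW, hnew⟩ := hsplit_l
    rw [hrest l hlt] at hVW
    refine ⟨_, hnew, fun l' hl' => ?_, fun l' hl' b => ?_⟩
    · rcases eq_or_ne l' l with rfl | hne
      · simpa using hVW
      · simpa [hne] using hsplit l' (Finset.mem_of_mem_insert_of_ne hl' hne)
    · rw [Finset.mem_insert, not_or] at hl'
      simpa [hl'.1] using hrest l' hl'.2 b

theorem exists_splitting_scheme (hf : Measurable f)
    (hneg : ¬ IsNegligible f (binaryWords 0) fun _ => univ) :
    ∃ A : List Bool → Set Z,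
      (∀ l, IsSplitting (2⁻¹ ^ l.length) (A l) (A (true :: l)) (A (false :: l))) ∧
      ∀ n, (fiberTuples f (binaryWords n) A).Nonempty := by
  let Level (n : ℕ) := {u : List Bool → Set Z //
    (∀ l ∈ binaryWords n, IsOpen (u l)) ∧ ¬ IsNegligible f (binaryWords n) u}
  have hstep (n : ℕ) (u : Level n) : ∃ v : Level (n + 1), ∀ l ∈ binaryWords n,
      IsSplitting (2⁻¹ ^ n) (u.1 l) (v.1 (true :: l)) (v.1 (false :: l)) := by
    obtain ⟨v, hv, hsplit⟩ := exists_isSplitting_of_not_isNegligible hf u.2.1 u.2.2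
      (ε := 2⁻¹ ^ n) (by simp)
    refine ⟨⟨v, ?_, hv⟩, hsplit⟩
    rintro (_ | ⟨_ | _, l⟩) hl
    · simp at hl
    · exact (hsplit l (by simpa using hl)).isOpen_right
    · exact (hsplit l (by simpa using hl)).isOpen_left
  choose next hnext using hstep
  let S (n : ℕ) : Level n := Nat.rec ⟨fun _ => univ, by simp, hneg⟩ next n
  refine ⟨fun l => (S l.length).1 l, fun l => hnext l.length (S l.length) l rfl, fun n => ?_⟩
  obtain ⟨z, hz, hzf⟩ := fiberTuples_nonempty_of_not_isNegligible (S n).2.2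
  refine ⟨z, ?_, hzf⟩
  rintro l rfl
  exact hz l rfl

theorem isSigmaInjective_univ_of_continuous (hf : Continuous f)
    (hc : ∀ y, (f ⁻¹' {y}).Countable) : IsSigmaInjective f univ := by
  by_contra hcon
  have hneg : ¬ IsNegligible f (binaryWords 0) fun _ => univ := by
    rintro ⟨N, hN, hcov⟩
    have hNuniv : N = univ := eq_univ_of_forall fun z => by
      obtain ⟨_, -, hz⟩ := hcov (fun _ => z) ⟨fun _ _ => trivial, fun _ _ _ _ => rfl⟩
      exact hz
    exact hcon (hNuniv ▸ hN)
  obtain ⟨A, hA, htup⟩ := exists_splitting_scheme hf.measurable hneg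
  have hdisj : CantorScheme.Disjoint A := by
    rintro l (_ | _) (_ | _) hab
    exacts [absurd rfl hab, (hA l).disjoint.symm, (hA l).disjoint, absurd rfl hab]
  have hanti : CantorScheme.ClosureAntitone A := by
    rintro l (_ | _)
    exacts [(hA l).closure_right, (hA l).closure_left]
  have hdiam : CantorScheme.VanishingDiam A := by
    intro x
    rw [← tendsto_add_atTop_iff_nat 1]
    refine tendsto_of_tendsto_of_tendsto_of_le_of_le tendsto_const_nhds
      (ENNReal.tendsto_pow_atTop_nhds_zero_of_lt_one (r := 2⁻¹) (by simp)) (fun n => zero_le)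
      fun n => ?_
    have hsplit := hA (PiNat.res x n)
    rw [PiNat.res_length] at hsplit
    rw [PiNat.res_succ]
    cases x n
    exacts [hsplit.ediam_right, hsplit.ediam_left]
  obtain ⟨φ, hφ, hconst⟩ := injective_const_of_cantorScheme hf hanti hdisj hdiam htup
  have hcount : (range φ).Countable :=
    (hc (f (φ fun _ => true))).mono (by rintro _ ⟨x, rfl⟩; exact hconst x _)
  have huniv : (univ : Set (ℕ → Bool)).Countable :=
    countable_of_injective_of_countable_image hφ.injOn (by rwa [image_univ])
  have := countable_univ_iff.1 huniv
  have hcard := Cardinal.mk_le_aleph0 (α := ℕ → Bool)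
  rw [← Cardinal.power_def, Cardinal.mk_bool, Cardinal.mk_nat, Cardinal.two_power_aleph0] at hcard
  exact Cardinal.aleph0_lt_continuum.not_ge hcard

end Scheme

theorem isSigmaInjective_univ_of_countable_fibers {Z Y : Type*} [MeasurableSpace Z]
    [StandardBorelSpace Z] [MeasurableSpace Y] [StandardBorelSpace Y] {f : Z → Y}
    (hf : Measurable f) (hc : ∀ y, (f ⁻¹' {y}).Countable) : IsSigmaInjective f univ := by
  let iZ := upgradeStandardBorel Z
  let _ := upgradeStandardBorel Y
  obtain ⟨t, hle, hft, ht⟩ := hf.exists_continuous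
  have hborel : @BorelSpace Z t _ :=
    @BorelSpace.mk Z t _ ((borel_eq_borel_of_le (t' := iZ.toTopologicalSpace) ht inferInstance
      hle).symm ▸ iZ.toBorelSpace.measurable_eq)
  let _ := @upgradeIsCompletelyMetrizable Z t _
  exact isSigmaInjective_univ_of_continuous hft hc

theorem exists_measurable_selector_of_injOn {X : Type*} [MeasurableSpace X] [StandardBorelSpace X]
    {G : Set (X × X)} (hG : MeasurableSet G) (hi : InjOn Prod.fst G) :
    ∃ g : X → X, Measurable g ∧ (∀ p ∈ G, g p.1 = p.2) ∧ ∀ x, (x, g x) ∈ G ∨ g x = x := by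
  classical
  let g (x : X) : X := if h : ∃ y, (x, y) ∈ G then h.choose else x
  have hg_mem (x : X) (h : ∃ y, (x, y) ∈ G) : (x, g x) ∈ G := by
    simpa only [g, dif_pos h] using h.choose_spec
  have hg_not_mem (x : X) (h : ¬ ∃ y, (x, y) ∈ G) : g x = x := dif_neg h
  have hgG : ∀ p ∈ G, g p.1 = p.2 := fun p hp =>
    congrArg Prod.snd (hi (hg_mem p.1 ⟨p.2, hp⟩) hp rfl)
  have hpre (B : Set X) : g ⁻¹' B =
      Prod.fst '' (G ∩ Prod.snd ⁻¹' B) ∪ (B \ Prod.fst '' G) := by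
    ext x
    by_cases h : ∃ y, (x, y) ∈ G
    · obtain ⟨y, hy⟩ := h
      have hxy : (x, g x) ∈ G := hg_mem x ⟨y, hy⟩
      refine ⟨fun hx => Or.inl ⟨_, ⟨hxy, hx⟩, rfl⟩, ?_⟩
      rintro (⟨p, ⟨hp, hpB⟩, rfl⟩ | ⟨-, hx⟩)
      · rwa [mem_preimage, hgG p hp]
      · exact absurd ⟨_, hxy, rfl⟩ hx
    · have hdom : x ∉ Prod.fst '' G := fun ⟨p, hp, hpx⟩ => h ⟨p.2, hpx ▸ hp⟩
      have hdom' : x ∉ Prod.fst '' (G ∩ Prod.snd ⁻¹' B) :=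
        fun hx => hdom (image_mono inter_subset_left hx)
      simp [mem_preimage, hg_not_mem x h, hdom, hdom']
  have himage {S : Set (X × X)} (hS : MeasurableSet S) (hSG : S ⊆ G) :
      MeasurableSet (Prod.fst '' S) :=
    hS.image_of_measurable_injOn measurable_fst (hi.mono hSG)
  refine ⟨g, fun B hB => ?_, hgG, fun x => ?_⟩
  · rw [hpre]
    exact (himage (hG.inter (measurable_snd hB)) inter_subset_left).union
      (hB.diff (himage hG Subset.rfl))
  · by_cases h : ∃ y, (x, y) ∈ G
    exacts [Or.inl (hg_mem x h), Or.inr (hg_not_mem x h)]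

/-- The sequence `g` of Borel functions enumerates the classes of `E`: the form in which the
countability of the classes of a Borel equivalence relation is used. -/
structure IsEnumeration {X : Type*} [MeasurableSpace X] (E : X → X → Prop) (g : ℕ → X → X) :
    Prop where
  measurable : ∀ n, Measurable (g n)
  rel_iff : ∀ x y, E x y ↔ ∃ n, g n x = y

theorem IsCBER.exists_isEnumeration [MeasurableSpace X] [StandardBorelSpace X]
    {E : X → X → Prop} (hE : IsCBER E) : ∃ g, IsEnumeration E g := by
  obtain ⟨hequiv, hmeas, hcount⟩ := hE
  have := hmeas.standardBorel
  let f : {p : X × X | E p.1 p.2} → X := fun p => p.1.1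
  have hfib (x : X) : (f ⁻¹' {x}).Countable := by
    refine MapsTo.countable_of_injOn (f := fun p => p.1.2) (t := {y | E x y}) ?_ ?_ (hcount x)
    · rintro ⟨p, hp⟩ rfl
      exact hp
    · rintro p rfl q hq he
      exact Subtype.ext (Prod.ext hq.symm he)
  obtain ⟨𝒢, hc, hG, hcover⟩ :=
    isSigmaInjective_univ_of_countable_fibers (f := f)
      (measurable_fst.comp measurable_subtype_coe) hfib
  have hsel (G : 𝒢) : ∃ g : X → X, Measurable g ∧
      (∀ p ∈ Subtype.val '' G.1, g p.1 = p.2) ∧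
      ∀ x, (x, g x) ∈ Subtype.val '' G.1 ∨ g x = x := by
    refine exists_measurable_selector_of_injOn (hmeas.subtype_image (hG G G.2).1) ?_
    rintro _ ⟨p, hp, rfl⟩ _ ⟨q, hq, rfl⟩ he
    rw [(hG G G.2).2 hp hq he]
  choose g hg hgG hgE using hsel
  obtain ⟨e, he⟩ : ∃ e : ℕ → Option 𝒢, Surjective e :=
    have := hc.to_subtype
    exists_surjective_nat _
  refine ⟨fun n => (e n).elim id g, fun n => ?_, fun x y => ⟨fun hxy => ?_, ?_⟩⟩
  · rcases e n with _ | G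
    exacts [measurable_id, hg G]
  · obtain ⟨G, hG', hp⟩ := hcover ▸ mem_univ (⟨(x, y), hxy⟩ : {p : X × X | E p.1 p.2})
    obtain ⟨n, hn⟩ := he (some ⟨G, hG'⟩)
    exact ⟨n, by rw [hn]; exact hgG ⟨G, hG'⟩ _ ⟨_, hp, rfl⟩⟩
  · rintro ⟨n, rfl⟩
    rcases e n with _ | G
    · exact hequiv.refl x
    · rcases hgE G x with ⟨p, -, hp⟩ | hx
      · exact (show E (x, g G x).1 (x, g G x).2 from hp ▸ p.2)
      · exact (show E x (g G x) from hx.symm ▸ hequiv.refl x)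

end LusinNovikov

section Size

variable (ρ : X → X → ℝ)

theorem eSize_mono {Y Y' : Set X} (h : Y ⊆ Y') (z : X) : eSize ρ Y z ≤ eSize ρ Y' z :=
  ENNReal.tsum_mono_subtype (fun y => ENNReal.ofReal (ρ y z)) h

theorem eSize_union_le (Y Y' : Set X) (z : X) :
    eSize ρ (Y ∪ Y') z ≤ eSize ρ Y z + eSize ρ Y' z :=
  ENNReal.tsum_union_le (fun y => ENNReal.ofReal (ρ y z)) Y Y'

theorem eSize_union {Y Y' : Set X} (h : Disjoint Y Y') (z : X) :
    eSize ρ (Y ∪ Y') z = eSize ρ Y z + eSize ρ Y' z :=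
  ENNReal.summable.tsum_union_disjoint (f := fun y => ENNReal.ofReal (ρ y z)) h ENNReal.summable

theorem eSize_empty (z : X) : eSize ρ ∅ z = 0 := by
  simp [eSize]

theorem eSize_singleton (y z : X) : eSize ρ {y} z = ENNReal.ofReal (ρ y z) := by
  simp [eSize]

theorem eSize_inter_add_diff (M Y : Set X) (z : X) :
    eSize ρ (M ∩ Y) z + eSize ρ (M \ Y) z = eSize ρ M z := by
  rw [← eSize_union ρ (disjoint_sdiff_right.mono_left inter_subset_right), inter_union_sdiff]

theorem eSize_ne_top {Y : Set X} (h : Y.Finite) (z : X) : eSize ρ Y z ≠ ⊤ := by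
  have := h.fintype
  rw [eSize, tsum_fintype]
  exact ENNReal.sum_ne_top.2 fun _ _ => ENNReal.ofReal_ne_top

theorem ofReal_le_eSize {Y : Set X} {y : X} (h : y ∈ Y) (z : X) :
    ENNReal.ofReal (ρ y z) ≤ eSize ρ Y z := by
  rw [← eSize_singleton]
  exact eSize_mono ρ (singleton_subset_iff.2 h) z

variable {ρ}

theorem eSize_le_of_forall_finset {Y : Set X} {z : X} {c : ℝ≥0∞}
    (h : ∀ t : Finset X, ↑t ⊆ Y → eSize ρ t z ≤ c) : eSize ρ Y z ≤ c := by
  rw [eSize, ENNReal.tsum_eq_iSup_sum]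
  refine iSup_le fun s => ?_
  let t : Finset X := s.map (Function.Embedding.subtype _)
  have hsum : ∑ y ∈ s, ENNReal.ofReal (ρ y z) = eSize ρ t z := by
    rw [eSize, Finset.tsum_subtype' t fun y => ENNReal.ofReal (ρ y z), Finset.sum_map]
    rfl
  rw [hsum]
  refine h t fun y hy => ?_
  obtain ⟨a, -, rfl⟩ := Finset.mem_map.1 (Finset.mem_coe.1 hy)
  exact a.2

variable [MeasurableSpace X] {E : X → X → Prop} {x y z : X}

theorem IsCocycle.ofReal_pos (hρ : IsCocycle E ρ) (h : E x y) : 0 < ENNReal.ofReal (ρ x y) :=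
  ENNReal.ofReal_pos.2 (hρ.2.1 h)

theorem IsCocycle.apply_self (hρ : IsCocycle E ρ) (h : E x x) : ρ x x = 1 :=
  (mul_eq_left₀ (hρ.2.1 h).ne').1 (hρ.2.2 h h).symm

theorem IsCocycle.ofReal_trans (hρ : IsCocycle E ρ) (hxy : E x y) (hyz : E y z) :
    ENNReal.ofReal (ρ x z) = ENNReal.ofReal (ρ x y) * ENNReal.ofReal (ρ y z) := by
  rw [hρ.2.2 hxy hyz, ENNReal.ofReal_mul (hρ.2.1 hxy).le]

theorem IsCocycle.eSize_eq_mul (hρ : IsCocycle E ρ) {Y : Set X} (hY : ∀ w ∈ Y, E w y)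
    (h : E y z) : eSize ρ Y z = eSize ρ Y y * ENNReal.ofReal (ρ y z) := by
  rw [eSize, eSize, ← ENNReal.tsum_mul_right]
  exact tsum_congr fun w => hρ.ofReal_trans (hY w w.2) h

theorem IsCocycle.eSize_le_mul_of_le (hρ : IsCocycle E ρ) {Y Y' : Set X} (hY : ∀ w ∈ Y, E w y)
    (hY' : ∀ w ∈ Y', E w y) (h : E y z) {c : ℝ≥0∞} (hle : eSize ρ Y y ≤ c * eSize ρ Y' y) :
    eSize ρ Y z ≤ c * eSize ρ Y' z := by
  rw [hρ.eSize_eq_mul hY h, hρ.eSize_eq_mul hY' h, ← mul_assoc]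
  gcongr

theorem IsCocycle.eSize_pos (hρ : IsCocycle E ρ) {Y : Set X} (h : y ∈ Y) (hyz : E y z) :
    0 < eSize ρ Y z :=
  (hρ.ofReal_pos hyz).trans_le (ofReal_le_eSize ρ h z)

end Size

section Enumeration

variable [MeasurableSpace X] {E : X → X → Prop} {ρ : X → X → ℝ} {g : ℕ → X → X}
  {T : Type*} [MeasurableSpace T] {a b : T → X}

namespace IsEnumeration

theorem rel_apply (hg : IsEnumeration E g) (n : ℕ) (x : X) : E x (g n x) :=
  (hg.rel_iff x _).2 ⟨n, rfl⟩

theorem measurable_exists (hg : IsEnumeration E g) {Q : T → X → Prop}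
    (hQ : Measurable fun p : T × X => Q p.1 p.2) (ha : Measurable a) :
    Measurable fun t => ∃ y, E (a t) y ∧ Q t y := by
  have heq : (fun t => ∃ y, E (a t) y ∧ Q t y) = fun t => ∃ n, Q t (g n (a t)) := by
    ext t
    simp only [hg.rel_iff]
    constructor
    · rintro ⟨_, ⟨n, rfl⟩, h⟩
      exact ⟨n, h⟩
    · rintro ⟨n, h⟩
      exact ⟨_, ⟨n, rfl⟩, h⟩
  rw [heq]
  exact .exists fun n => hQ.comp (measurable_id.prodMk ((hg.measurable n).comp ha))

theorem measurable_forall (hg : IsEnumeration E g) {Q : T → X → Prop}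
    (hQ : Measurable fun p : T × X => Q p.1 p.2) (ha : Measurable a) :
    Measurable fun t => ∀ y, E (a t) y → Q t y := by
  simpa only [not_exists, not_and, not_not] using
    (hg.measurable_exists (Q := fun t y => ¬ Q t y) hQ.not ha).not

theorem measurable_rel [StandardBorelSpace X] (hg : IsEnumeration E g) :
    Measurable fun p : X × X => E p.1 p.2 := by
  simp only [hg.rel_iff]
  exact .exists fun n => ((hg.measurable n).comp measurable_fst).eq measurable_snd

theorem measurable_eSize [StandardBorelSpace X] (hg : IsEnumeration E g) (hρ : IsCocycle E ρ)
    {H : T → X → Prop} (hH : Measurable fun p : T × X => H p.1 p.2) (ha : Measurable a)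
    (hb : Measurable b) (hHE : ∀ t y, H t y → E (a t) y) :
    Measurable fun t => eSize ρ {y | H t y} (b t) := by
  classical
  let s (t : T) : Set ℕ := {n | (∀ m < n, g m (a t) ≠ g n (a t)) ∧ H t (g n (a t))}
  have himage (t : T) : {y | H t y} = (fun n => g n (a t)) '' s t := by
    ext y
    refine ⟨fun hy => ?_, ?_⟩
    · have hex := (hg.rel_iff _ _).1 (hHE t y hy)
      refine ⟨Nat.find hex, ⟨fun m hm => ?_, ?_⟩, Nat.find_spec hex⟩
      · rw [Nat.find_spec hex]
        exact Nat.find_min hex hm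
      · rwa [Nat.find_spec hex]
    · rintro ⟨n, hn, rfl⟩
      exact hn.2
  have hinj (t : T) : InjOn (fun n => g n (a t)) (s t) := by
    intro n hn m hm h
    by_contra hne
    rcases lt_or_gt_of_ne hne with hlt | hlt
    exacts [hm.1 n hlt h, hn.1 m hlt h.symm]
  have hsum (t : T) : eSize ρ {y | H t y} (b t) =
      ∑' n, (s t).indicator (fun n => ENNReal.ofReal (ρ (g n (a t)) (b t))) n := by
    rw [eSize, himage t, tsum_image (fun y => ENNReal.ofReal (ρ y (b t))) (hinj t),
      tsum_subtype (s t) fun n => ENNReal.ofReal (ρ (g n (a t)) (b t))]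
  simp only [hsum, indicator_apply]
  refine .tsum fun n => .ite (measurableSet_setOfPred.2 (.and ?_ ?_)) ?_ measurable_const
  · exact .forall fun m => .forall fun _ =>
      (((hg.measurable m).comp ha).eq ((hg.measurable n).comp ha)).not
  · exact hH.comp (measurable_id.prodMk ((hg.measurable n).comp ha))
  · exact (hρ.1.comp (((hg.measurable n).comp ha).prodMk hb)).ennreal_ofReal

theorem exists_measurable_selector (hg : IsEnumeration E g) {Q : X → X → Prop}
    (hQ : Measurable fun p : X × X => Q p.1 p.2) (hex : ∀ x, ∃ y, E x y ∧ Q x y) :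
    ∃ f : X → X, Measurable f ∧ ∀ x, E x (f x) ∧ Q x (f x) := by
  classical
  have hfind (x : X) : ∃ n, Q x (g n x) := by
    obtain ⟨y, hxy, hy⟩ := hex x
    obtain ⟨n, rfl⟩ := (hg.rel_iff x y).1 hxy
    exact ⟨n, hy⟩
  have hfind_meas : Measurable fun x => Nat.find (hfind x) := measurable_find hfind fun n =>
    measurableSet_setOfPred.2 (hQ.comp (measurable_id.prodMk (hg.measurable n)))
  have hg_meas : Measurable fun p : ℕ × X => g p.1 p.2 :=
    measurable_from_prod_countable_right fun n => hg.measurable n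
  exact ⟨fun x => g (Nat.find (hfind x)) x, hg_meas.comp (hfind_meas.prodMk measurable_id),
    fun x => ⟨hg.rel_apply _ x, Nat.find_spec (hfind x)⟩⟩

theorem exists_measurable_selector_or_self [StandardBorelSpace X] (hE : Equivalence E)
    (hg : IsEnumeration E g) {Q : X → X → Prop} (hQ : Measurable fun p : X × X => Q p.1 p.2) :
    ∃ f : X → X, Measurable f ∧ (∀ x, E x (f x)) ∧
      ∀ x, Q x (f x) ∨ f x = x ∧ ∀ y, E x y → ¬ Q x y := by
  have hno : Measurable fun p : X × X => p.2 = p.1 ∧ ∀ y, E p.1 y → ¬ Q p.1 y :=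
    (measurable_snd.eq measurable_fst).and (hg.measurable_forall
      (hQ.comp ((measurable_fst.comp measurable_fst).prodMk measurable_snd)).not measurable_fst)
  obtain ⟨f, hf, hfQ⟩ := hg.exists_measurable_selector
    (Q := fun x y => Q x y ∨ y = x ∧ ∀ z, E x z → ¬ Q x z) (hQ.or hno) fun x => by
    by_cases hx : ∃ y, E x y ∧ Q x y
    · obtain ⟨y, hxy, hy⟩ := hx
      exact ⟨y, hxy, Or.inl hy⟩
    · push Not at hx
      exact ⟨x, hE.refl x, Or.inr ⟨rfl, hx⟩⟩
  exact ⟨f, hf, fun x => (hfQ x).1, fun x => (hfQ x).2⟩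

end IsEnumeration

end Enumeration

/-! ### Smoothness -/

section Smoothness

variable {E : X → X → Prop} {ρ : X → X → ℝ} {g : ℕ → X → X}

/-- `y ∈ K` is `ρ`-largest in `K ∩ [x]_E`, with ties broken by the injection `e`. -/
def IsLexMax (E : X → X → Prop) (ρ : X → X → ℝ) (e : X → ℝ) (K : Set X) (x y : X) : Prop :=
  y ∈ K ∧ ∀ w, E x w → w ∈ K → toLex (ρ w x, e w) ≤ toLex (ρ y x, e y)

theorem IsLexMax.unique {e : X → ℝ} (he : Function.Injective e) {K : Set X} {x y y' : X}
    (hxy : E x y) (hxy' : E x y') (h : IsLexMax E ρ e K x y) (h' : IsLexMax E ρ e K x y') :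
    y = y' :=
  he (congrArg Prod.snd (toLex.injective
    (le_antisymm (h'.2 y hxy h.1) (h.2 y' hxy' h'.1))))

variable [MeasurableSpace X]

theorem measurable_isLexMax (hg : IsEnumeration E g) (hρ : IsCocycle E ρ) {e : X → ℝ}
    (he : Measurable e) {K : Set X} (hK : MeasurableSet K) :
    Measurable fun p : X × X => IsLexMax E ρ e K p.1 p.2 := by
  have hw : Measurable fun q : (X × X) × X => ρ q.2 q.1.1 :=
    hρ.1.comp (measurable_snd.prodMk (measurable_fst.comp measurable_fst))
  have hy : Measurable fun q : (X × X) × X => ρ q.1.2 q.1.1 :=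
    hρ.1.comp ((measurable_snd.comp measurable_fst).prodMk (measurable_fst.comp measurable_fst))
  refine (hK.mem.comp measurable_snd).and (hg.measurable_forall
    ((hK.mem.comp measurable_snd).imp ?_) measurable_fst)
  simp only [Prod.Lex.toLex_le_toLex]
  exact .or (measurableSet_setOfPred.1 (measurableSet_lt hw hy))
    (.and (hw.eq hy) (measurableSet_setOfPred.1
      (measurableSet_le (he.comp measurable_snd)
        (he.comp (measurable_snd.comp measurable_fst)))))

theorem IsLexMax.of_rel (hE : Equivalence E) (hρ : IsCocycle E ρ) {e : X → ℝ} {K : Set X}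
    {x x' y : X} (hxx' : E x x') (hxy : E x y) (h : IsLexMax E ρ e K x y) :
    IsLexMax E ρ e K x' y := by
  refine ⟨h.1, fun w hw hwK => ?_⟩
  have hxw : E x w := hE.trans hxx' hw
  have hpos := hρ.2.1 hxx'
  have hle := h.2 w hxw hwK
  rw [Prod.Lex.toLex_le_toLex] at hle ⊢
  simp only at hle ⊢
  rw [hρ.2.2 (hE.symm hxw) hxx', hρ.2.2 (hE.symm hxy) hxx']
  refine hle.imp (fun h => mul_lt_mul_of_pos_right h hpos) fun h => ⟨by rw [h.1], h.2⟩

theorem exists_isLexMax (hE : Equivalence E) (hρ : IsCocycle E ρ) (e : X → ℝ) {K : Set X} {x : X}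
    (hne : eSize ρ {y | E x y ∧ y ∈ K} x ≠ 0) (hfin : eSize ρ {y | E x y ∧ y ∈ K} x ≠ ⊤) :
    ∃ y, E x y ∧ IsLexMax E ρ e K x y := by
  obtain ⟨y₀, hy₀⟩ : {y | E x y ∧ y ∈ K}.Nonempty := by
    rw [nonempty_iff_ne_empty]
    exact fun h => hne (h ▸ eSize_empty ρ x)
  have hlarge : {y ∈ {y | E x y ∧ y ∈ K} | ρ y₀ x ≤ ρ y x}.Finite := by
    refine ((ENNReal.finite_const_le_of_tsum_ne_top hfin
      (hρ.ofReal_pos (hE.symm hy₀.1)).ne').image Subtype.val).subset ?_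
    exact fun y hy => ⟨⟨y, hy.1⟩, ENNReal.ofReal_le_ofReal hy.2, rfl⟩
  obtain ⟨y, hy, hmax⟩ :=
    exists_max_image _ (fun y => toLex (ρ y x, e y)) hlarge ⟨y₀, hy₀, le_rfl⟩
  refine ⟨y, hy.1.1, hy.1.2, fun w hw hwK => ?_⟩
  by_cases hwy₀ : ρ y₀ x ≤ ρ w x
  · exact hmax w ⟨⟨hw, hwK⟩, hwy₀⟩
  · exact Prod.Lex.toLex_le_toLex.2 (Or.inl ((not_le.1 hwy₀).trans_le hy.2))

variable [StandardBorelSpace X]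

/-- A point is colored by its index in the enumeration of its class from the representative. -/
theorem smoothOn_of_reduction (hE : Equivalence E) (hg : IsEnumeration E g) (ρ : X → X → ℝ)
    {B : Set X} {k : X → X} (hk : Measurable k) (hkE : ∀ x, E x (k x))
    (hconst : ∀ x ∈ B, ∀ y ∈ B, E x y → k x = k y) : SmoothOn E ρ B := by
  classical
  have hfind (x : X) : ∃ n, g n (k x) = x := (hg.rel_iff _ _).1 (hE.symm (hkE x))
  refine ⟨Ioi 0, isOpen_Ioi, mem_Ioi.2 one_pos, Subset.rfl, fun x => Nat.find (hfind x), ?_, ?_⟩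
  · exact measurable_find hfind fun n =>
      measurableSet_setOfPred.2 (((hg.measurable n).comp hk).eq measurable_id)
  · intro x y hx hy hne hxy _ hc
    refine hne ?_
    calc x = g (Nat.find (hfind x)) (k x) := (Nat.find_spec (hfind x)).symm
      _ = g (Nat.find (hfind y)) (k y) := congrArg₂ g hc (hconst x hx y hy hxy)
      _ = y := Nat.find_spec (hfind y)

theorem smoothOn_of_eSize_finite (hE : Equivalence E) (hg : IsEnumeration E g)
    (hρ : IsCocycle E ρ) {B K : Set X} (hK : MeasurableSet K)
    (hne : ∀ x ∈ B, eSize ρ {y | E x y ∧ y ∈ K} x ≠ 0)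
    (hfin : ∀ x ∈ B, eSize ρ {y | E x y ∧ y ∈ K} x ≠ ⊤) : SmoothOn E ρ B := by
  have he := measurableEmbedding_embeddingReal X
  obtain ⟨k, hk, hkE, hkmax⟩ := hg.exists_measurable_selector_or_self hE
    (measurable_isLexMax hg hρ he.measurable hK)
  have hmax : ∀ x ∈ B, IsLexMax E ρ (embeddingReal X) K x (k x) := fun x hx => by
    obtain ⟨y, hxy, hy⟩ := exists_isLexMax hE hρ (embeddingReal X) (hne x hx) (hfin x hx)
    exact (hkmax x).resolve_right fun h => h.2 y hxy hy
  refine smoothOn_of_reduction hE hg ρ hk hkE fun x hx y hy hxy => ?_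
  exact ((hmax x hx).of_rel hE hρ hxy (hkE x)).unique he.injective
    (hE.trans (hE.symm hxy) (hkE x)) (hkE y) (hmax y hy)

end Smoothness

/-- The union of the `E`-classes which `V` meets in a set of positive finite `ρ`-size. -/
def finiteSizePart (E : X → X → Prop) (ρ : X → X → ℝ) (V : Set X) : Set X :=
  {x | eSize ρ {y | E x y ∧ y ∈ V} x ≠ 0 ∧ eSize ρ {y | E x y ∧ y ∈ V} x ≠ ⊤}

section FiniteSizePart

variable [MeasurableSpace X] {E : X → X → Prop} {ρ : X → X → ℝ}

theorem eInvariant_finiteSizePart (hE : Equivalence E) (hρ : IsCocycle E ρ) (V : Set X) :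
    EInvariant E (finiteSizePart E ρ V) := by
  rintro x y hxy ⟨hne, hfin⟩
  have hset : {z | E y z ∧ z ∈ V} = {z | E x z ∧ z ∈ V} := by
    ext z
    exact and_congr_left fun _ => ⟨hE.trans hxy, hE.trans (hE.symm hxy)⟩
  have hsize : eSize ρ {z | E y z ∧ z ∈ V} y =
      eSize ρ {z | E x z ∧ z ∈ V} x * ENNReal.ofReal (ρ x y) := by
    rw [hset]
    exact hρ.eSize_eq_mul (fun z hz => hE.symm hz.1) hxy
  refine ⟨?_, ?_⟩ <;> rw [hsize]
  exacts [mul_ne_zero hne (hρ.ofReal_pos hxy).ne', ENNReal.mul_ne_top hfin ofReal_ne_top]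

variable [StandardBorelSpace X] {g : ℕ → X → X}

theorem measurableSet_finiteSizePart (hg : IsEnumeration E g) (hρ : IsCocycle E ρ) {V : Set X}
    (hV : MeasurableSet V) : MeasurableSet (finiteSizePart E ρ V) := by
  have hsize : Measurable fun x => eSize ρ {y | E x y ∧ y ∈ V} x :=
    hg.measurable_eSize hρ (H := fun x y => E x y ∧ y ∈ V)
      (hg.measurable_rel.and (hV.mem.comp measurable_snd)) measurable_id measurable_id
      fun _ _ h => h.1
  exact (hsize (measurableSet_singleton 0).compl).inter (hsize (measurableSet_singleton ⊤).compl)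

theorem smoothOn_iUnion_finiteSizePart (hE : Equivalence E) (hg : IsEnumeration E g)
    (hρ : IsCocycle E ρ) {ι : Type*} [Countable ι] {V : ι → Set X}
    (hV : ∀ i, MeasurableSet (V i)) : SmoothOn E ρ (⋃ i, finiteSizePart E ρ (V i)) := by
  obtain ⟨e, he⟩ := Countable.exists_injective_nat ι
  let B (i : ι) : Set X := finiteSizePart E ρ (V i)
  have hBinv (i : ι) : EInvariant E (B i) := eInvariant_finiteSizePart hE hρ (V i)
  have hB (i : ι) : MeasurableSet (B i) := measurableSet_finiteSizePart hg hρ (hV i)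
  let K : Set X := {y | ∃ i, y ∈ V i ∧ y ∈ B i ∧ ∀ j, y ∈ B j → e i ≤ e j}
  have hK : MeasurableSet K := measurableSet_setOfPred.2 (.exists fun i =>
    (hV i).mem.and ((hB i).mem.and (.forall fun j => (hB j).mem.imp measurable_const)))
  have hfirst : ∀ x ∈ ⋃ i, B i, ∃ i, x ∈ B i ∧ {y | E x y ∧ y ∈ K} = {y | E x y ∧ y ∈ V i} := by
    intro x hx
    obtain ⟨i, hxi, hmin⟩ :=
      exists_minimalFor_of_wellFoundedLT (fun i => x ∈ B i) e (mem_iUnion.1 hx)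
    have hle (j : ι) (hj : x ∈ B j) : e i ≤ e j := (le_total (e i) (e j)).elim id (hmin hj)
    refine ⟨i, hxi, ext fun y => and_congr_right fun hxy => ⟨?_, fun hy => ?_⟩⟩
    · rintro ⟨j, hyj, hyB, hmin'⟩
      have hij : i = j := he (le_antisymm (hle j (hBinv j (hE.symm hxy) hyB))
        (hmin' i (hBinv i hxy hxi)))
      exact hij ▸ hyj
    · exact ⟨i, hy, hBinv i hxy hxi, fun j hj => hle j (hBinv j (hE.symm hxy) hj)⟩
  refine smoothOn_of_eSize_finite hE hg hρ hK (fun x hx => ?_) (fun x hx => ?_) <;>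
    obtain ⟨i, hxi, hset⟩ := hfirst x hx <;> rw [hset]
  exacts [hxi.1, hxi.2]

end FiniteSizePart

/-! ### Maximal disjoint families of finite sets -/

section Greedy

variable (P : ℕ → Set X) (S : ℕ → X → Set X)

/-- The points covered before stage `n` when, at each stage `m < n` in turn, all sets `S m x` with
`x ∈ P m` that avoid the points covered before stage `m` are selected. -/
def greedyUsed : ℕ → Set X
  | 0 => ∅
  | n + 1 => greedyUsed n ∪ {y | ∃ x ∈ P n, Disjoint (S n x) (greedyUsed n) ∧ y ∈ S n x}

/-- The indices of the sets selected at stage `n` of the greedy selection. -/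
def greedyChosen (n : ℕ) : Set X :=
  {x ∈ P n | Disjoint (S n x) (greedyUsed P S n)}

/-- Two points are related if they lie in a common set of the greedy selection. -/
def greedyRel (y y' : X) : Prop :=
  ∃ n, ∃ x ∈ greedyChosen P S n, y ∈ S n x ∧ y' ∈ S n x

variable {P S} {n m : ℕ} {x x' y y' z : X}

theorem greedyUsed_mono : Monotone (greedyUsed P S) :=
  monotone_nat_of_le_succ fun _ => subset_union_left

theorem subset_greedyUsed_succ (hx : x ∈ greedyChosen P S n) : S n x ⊆ greedyUsed P S (n + 1) :=
  fun _ hy => Or.inr ⟨x, hx.1, hx.2, hy⟩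

theorem eq_of_mem_greedyChosen (hP : ∀ n, (P n).PairwiseDisjoint (S n))
    (hx : x ∈ greedyChosen P S n) (hx' : x' ∈ greedyChosen P S m) (hy : y ∈ S n x)
    (hy' : y ∈ S m x') : S n x = S m x' := by
  wlog hnm : n ≤ m generalizing n m x x'
  · exact (this hx' hx hy' hy (le_of_not_ge hnm)).symm
  rcases hnm.eq_or_lt with rfl | hlt
  · rw [(hP n).elim_set hx.1 hx'.1 y hy hy']
  · have hyU := greedyUsed_mono (Nat.succ_le_of_lt hlt) (subset_greedyUsed_succ hx hy)
    exact (disjoint_left.1 hx'.2 hy' hyU).elim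

theorem setOf_greedyRel (hP : ∀ n, (P n).PairwiseDisjoint (S n)) (hx : x ∈ greedyChosen P S n)
    (hy : y ∈ S n x) : {y' | greedyRel P S y y'} = S n x := by
  ext y'
  refine ⟨?_, fun hy' => ⟨n, x, hx, hy, hy'⟩⟩
  rintro ⟨m, x', hx', hyx', hy'⟩
  rwa [eq_of_mem_greedyChosen hP hx hx' hy hyx']

theorem greedyRel.symm (h : greedyRel P S y y') : greedyRel P S y' y :=
  let ⟨n, x, hx, hy, hy'⟩ := h
  ⟨n, x, hx, hy', hy⟩

theorem greedyRel.trans (hP : ∀ n, (P n).PairwiseDisjoint (S n)) (h : greedyRel P S y y')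
    (h' : greedyRel P S y' z) : greedyRel P S y z := by
  obtain ⟨n, x, hx, hy, hy'⟩ := h
  have hz : z ∈ {z | greedyRel P S y' z} := h'
  rw [setOf_greedyRel hP hx hy'] at hz
  exact ⟨n, x, hx, hy, hz⟩

theorem greedyRel_self_of_mem_greedyUsed (hy : y ∈ greedyUsed P S n) : greedyRel P S y y := by
  induction n with
  | zero => exact hy.elim
  | succ n ih =>
    rcases hy with hy | ⟨x, hx, hdisj, hy⟩
    exacts [ih hy, ⟨n, x, ⟨hx, hdisj⟩, hy, hy⟩]

theorem exists_greedyRel_self (hx : x ∈ P n) (hne : (S n x).Nonempty) :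
    ∃ y ∈ S n x, greedyRel P S y y := by
  by_cases hdisj : Disjoint (S n x) (greedyUsed P S n)
  · obtain ⟨y, hy⟩ := hne
    exact ⟨y, hy, n, x, ⟨hx, hdisj⟩, hy, hy⟩
  · obtain ⟨y, hy, hyU⟩ := not_disjoint_iff.1 hdisj
    exact ⟨y, hy, greedyRel_self_of_mem_greedyUsed hyU⟩

end Greedy

/-- A finite Borel partial equivalence relation contained in `E`, that is, a finite Borel
subequivalence relation of the restriction of `E` to the Borel set `{x | R x x}`. -/
structure IsFinPER [MeasurableSpace X] (E R : X → X → Prop) : Prop where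
  measurable : Measurable fun p : X × X => R p.1 p.2
  symm : ∀ ⦃x y⦄, R x y → R y x
  trans : ∀ ⦃x y z⦄, R x y → R y z → R x z
  le : ∀ ⦃x y⦄, R x y → E x y
  finite : ∀ x, {y | R x y}.Finite

section MaximalFamily

/-- The finite subset of the class of `x` coded by a finite set of indices of an enumeration. -/
def codedSet (g : ℕ → X → X) (l : Finset ℕ) (x : X) : Set X :=
  {y | ∃ i ∈ l, g i x = y}

/-- The points `x ∈ u` that are the only point of `u` among the `g j (g i x)` with `i ∈ l` and
`j < M`, and that are recovered as such a point from each `g i x`. -/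
def isolatedPoints (g : ℕ → X → X) (l : Finset ℕ) (M : ℕ) (u : Set X) : Set X :=
  {x ∈ u | ∀ i ∈ l, (∃ j < M, g j (g i x) = x) ∧ ∀ j < M, g j (g i x) ∈ u → g j (g i x) = x}

theorem pairwiseDisjoint_isolatedPoints (g : ℕ → X → X) (l : Finset ℕ) (M : ℕ) (u : Set X) :
    (isolatedPoints g l M u).PairwiseDisjoint (codedSet g l) := by
  refine pairwiseDisjoint_iff.2 ?_
  rintro x ⟨-, hx⟩ x' ⟨hx'u, hx'⟩ ⟨_, ⟨i, hi, rfl⟩, i', hi', heq⟩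
  obtain ⟨j, hj, hjx'⟩ := (hx' i' hi').1
  rw [heq] at hjx'
  have hjx := (hx i hi).2 j hj (hjx'.symm ▸ hx'u)
  exact hjx.symm.trans hjx'

theorem codedSet_finite (g : ℕ → X → X) (l : Finset ℕ) (x : X) : (codedSet g l x).Finite :=
  l.finite_toSet.image fun i => g i x

theorem exists_separating_seq (X : Type*) [MeasurableSpace X] [StandardBorelSpace X] :
    ∃ u : ℕ → Set X, (∀ n, MeasurableSet (u n)) ∧
      ∀ (x : X) (F : Set X), F.Finite → x ∉ F → ∃ n, x ∈ u n ∧ Disjoint F (u n) := by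
  let _ := upgradeStandardBorel X
  obtain ⟨u, hu⟩ := ((TopologicalSpace.countable_countableBasis X).insert ∅).exists_eq_range
    (insert_nonempty _ _)
  refine ⟨u, fun n => ?_, fun x F hF hx => ?_⟩
  · rcases (hu ▸ mem_range_self n : u n ∈ insert ∅ (TopologicalSpace.countableBasis X)) with h | h
    · exact h ▸ MeasurableSet.empty
    · exact ((TopologicalSpace.isBasis_countableBasis X).isOpen h).measurableSet
  · obtain ⟨v, hv, hxv, hvF⟩ :=
      (TopologicalSpace.isBasis_countableBasis X).exists_subset_of_mem_open
      (show x ∈ Fᶜ from hx) hF.isClosed.isOpen_compl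
    obtain ⟨n, rfl⟩ : v ∈ range u := hu ▸ mem_insert_of_mem ∅ hv
    exact ⟨n, hxv, subset_compl_iff_disjoint_left.1 hvF⟩

variable [MeasurableSpace X] {E : X → X → Prop} {g : ℕ → X → X}

theorem IsEnumeration.rel_of_mem_codedSet (hg : IsEnumeration E g) {l : Finset ℕ} {x y : X}
    (h : y ∈ codedSet g l x) : E x y :=
  let ⟨i, _, hi⟩ := h
  hi ▸ hg.rel_apply i x

theorem IsEnumeration.exists_codedSet_eq (hg : IsEnumeration E g) {x : X} {T : Set X}
    (hT : T.Finite) (hTE : ∀ y ∈ T, E x y) : ∃ l, codedSet g l x = T := by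
  classical
  choose! i hi using fun y hy => (hg.rel_iff x y).1 (hTE y hy)
  refine ⟨hT.toFinset.image i, ext fun y => ⟨?_, fun hy => ?_⟩⟩
  · rintro ⟨_, hj, rfl⟩
    obtain ⟨y, hy, rfl⟩ := Finset.mem_image.1 hj
    rw [hT.mem_toFinset] at hy
    rwa [hi y hy]
  · exact ⟨i y, Finset.mem_image_of_mem i (hT.mem_toFinset.2 hy), hi y hy⟩

theorem IsEnumeration.exists_mem_isolatedPoints (hE : Equivalence E) (hg : IsEnumeration E g)
    {u : ℕ → Set X}
    (hu : ∀ (x : X) (F : Set X), F.Finite → x ∉ F → ∃ n, x ∈ u n ∧ Disjoint F (u n))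
    (l : Finset ℕ) (x : X) : ∃ M m, x ∈ isolatedPoints g l M (u m) := by
  choose j hj using fun i => (hg.rel_iff _ _).1 (hE.symm (hg.rel_apply i x))
  let M := l.sup j + 1
  have hfin : {y | ∃ i ∈ l, ∃ k < M, g k (g i x) = y}.Finite := by
    refine ((l.finite_toSet.prod (finite_lt_nat M)).image fun p => g p.2 (g p.1 x)).subset ?_
    rintro _ ⟨i, hi, k, hk, rfl⟩
    exact ⟨(i, k), ⟨hi, hk⟩, rfl⟩
  obtain ⟨m, hxm, hm⟩ := hu x _ (hfin.subset sdiff_subset) fun h => h.2 (mem_singleton x)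
  refine ⟨M, m, hxm, fun i hi => ⟨⟨j i, ?_, hj i⟩, fun k hk hku => ?_⟩⟩
  · exact Nat.lt_succ_of_le (Finset.le_sup hi)
  · by_contra hne
    exact disjoint_left.1 hm ⟨⟨i, hi, k, hk, rfl⟩, hne⟩ hku

theorem IsEnumeration.measurableSet_greedyChosen (hg : IsEnumeration E g) {P : ℕ → Set X}
    (hP : ∀ n, MeasurableSet (P n)) {l : ℕ → Finset ℕ} {n : ℕ}
    (hU : MeasurableSet (greedyUsed P (fun n => codedSet g (l n)) n)) :
    MeasurableSet (greedyChosen P (fun n => codedSet g (l n)) n) := by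
  refine measurableSet_setOfPred.2 ((hP n).mem.and ?_)
  simp only [disjoint_left, codedSet, mem_ofPred_eq, forall_exists_index, and_imp,
    forall_apply_eq_imp_iff₂]
  exact .forall fun i => .forall fun _ => (hU.mem.comp (hg.measurable i)).not

variable [StandardBorelSpace X]

theorem IsEnumeration.measurableSet_isolatedPoints (hg : IsEnumeration E g) (l : Finset ℕ)
    (M : ℕ) {u : Set X} (hu : MeasurableSet u) : MeasurableSet (isolatedPoints g l M u) := by
  have hgg (i j : ℕ) : Measurable fun x => g j (g i x) := (hg.measurable j).comp (hg.measurable i)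
  refine measurableSet_setOfPred.2 (hu.mem.and (.forall fun i => .forall fun _ => .and ?_ ?_))
  · exact .exists fun j => measurable_const.and ((hgg i j).eq measurable_id)
  · exact .forall fun j => .forall fun _ =>
      (hu.mem.comp (hgg i j)).imp ((hgg i j).eq measurable_id)

/-- The countable coloring of the intersection graph on the finite subsets of the classes. -/
theorem IsEnumeration.exists_pairwiseDisjoint_codedSet (hE : Equivalence E)
    (hg : IsEnumeration E g) :
    ∃ (P : ℕ → Set X) (l : ℕ → Finset ℕ), (∀ n, MeasurableSet (P n)) ∧
      (∀ n, (P n).PairwiseDisjoint (codedSet g (l n))) ∧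
      ∀ (x : X) (T : Set X), T.Finite → (∀ y ∈ T, E x y) →
        ∃ n, x ∈ P n ∧ codedSet g (l n) x = T := by
  obtain ⟨u, hu, hsep⟩ := exists_separating_seq X
  obtain ⟨k, hk⟩ := exists_surjective_nat (Finset ℕ × ℕ × ℕ)
  refine ⟨fun n => isolatedPoints g (k n).1 (k n).2.1 (u (k n).2.2), fun n => (k n).1,
    fun n => hg.measurableSet_isolatedPoints _ _ (hu _),
    fun n => pairwiseDisjoint_isolatedPoints _ _ _ _, fun x T hT hTE => ?_⟩
  obtain ⟨l, rfl⟩ := hg.exists_codedSet_eq hT hTE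
  obtain ⟨M, m, hx⟩ := hg.exists_mem_isolatedPoints hE hsep l x
  obtain ⟨n, hn⟩ := hk (l, M, m)
  exact ⟨n, by simpa only [hn] using hx, by simp only [hn]⟩

theorem IsEnumeration.measurable_mem_codedSet (hg : IsEnumeration E g) (l : Finset ℕ) :
    Measurable fun p : X × X => p.2 ∈ codedSet g l p.1 :=
  .exists fun i => measurable_const.and (((hg.measurable i).comp measurable_fst).eq measurable_snd)

theorem IsEnumeration.measurableSet_greedyUsed (hE : Equivalence E) (hg : IsEnumeration E g)
    {P : ℕ → Set X} (hP : ∀ n, MeasurableSet (P n)) (l : ℕ → Finset ℕ) (n : ℕ) :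
    MeasurableSet (greedyUsed P (fun n => codedSet g (l n)) n) := by
  induction n with
  | zero => exact .empty
  | succ n ih =>
    have hstage : {y | ∃ x ∈ P n, Disjoint (codedSet g (l n) x)
          (greedyUsed P (fun n => codedSet g (l n)) n) ∧ y ∈ codedSet g (l n) x} =
        {y | ∃ x, E y x ∧ x ∈ greedyChosen P (fun n => codedSet g (l n)) n ∧
          y ∈ codedSet g (l n) x} := by
      ext y
      refine ⟨?_, fun ⟨x, _, hx, hy⟩ => ⟨x, hx.1, hx.2, hy⟩⟩
      rintro ⟨x, hx, hdisj, i, hi, rfl⟩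
      exact ⟨x, hE.symm (hg.rel_apply i x), ⟨hx, hdisj⟩, i, hi, rfl⟩
    refine ih.union (hstage ▸ measurableSet_setOfPred.2 (hg.measurable_exists (.and ?_ ?_)
      measurable_id))
    · exact (hg.measurableSet_greedyChosen hP ih).mem.comp measurable_snd
    · exact (hg.measurable_mem_codedSet (l n)).comp measurable_swap

theorem IsEnumeration.isFinPER_greedyRel (hE : Equivalence E) (hg : IsEnumeration E g)
    {P : ℕ → Set X} (hP : ∀ n, MeasurableSet (P n)) {l : ℕ → Finset ℕ}
    (hdisj : ∀ n, (P n).PairwiseDisjoint (codedSet g (l n))) :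
    IsFinPER E (greedyRel P fun n => codedSet g (l n)) where
  measurable := by
    have heq (y y' : X) : greedyRel P (fun n => codedSet g (l n)) y y' ↔
        ∃ n x, E y x ∧ x ∈ greedyChosen P (fun n => codedSet g (l n)) n ∧
          y ∈ codedSet g (l n) x ∧ y' ∈ codedSet g (l n) x := by
      refine ⟨?_, fun ⟨n, x, _, h⟩ => ⟨n, x, h⟩⟩
      rintro ⟨n, x, hx, ⟨i, hi, rfl⟩, hy'⟩
      exact ⟨n, x, hE.symm (hg.rel_apply i x), hx, ⟨i, hi, rfl⟩, hy'⟩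
    simp only [heq]
    refine .exists fun n => hg.measurable_exists (.and ?_ (.and ?_ ?_)) measurable_fst
    · exact (hg.measurableSet_greedyChosen hP (hg.measurableSet_greedyUsed hE hP l n)).mem.comp
        measurable_snd
    · exact (hg.measurable_mem_codedSet (l n)).comp
        (measurable_snd.prodMk (measurable_fst.comp measurable_fst))
    · exact (hg.measurable_mem_codedSet (l n)).comp
        (measurable_snd.prodMk (measurable_snd.comp measurable_fst))
  symm _ _ := greedyRel.symm
  trans _ _ _ := greedyRel.trans hdisj
  le := by
    rintro y y' ⟨n, x, -, hy, hy'⟩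
    exact hE.trans (hE.symm (hg.rel_of_mem_codedSet hy)) (hg.rel_of_mem_codedSet hy')
  finite y := by
    rcases {y' | greedyRel P (fun n => codedSet g (l n)) y y'}.eq_empty_or_nonempty with h | h
    · exact h ▸ finite_empty
    · obtain ⟨_, n, x, hx, hy, -⟩ := h
      rw [setOf_greedyRel hdisj hx hy]
      exact codedSet_finite g (l n) x

theorem IsEnumeration.exists_maximal_isFinPER (hE : Equivalence E) (hg : IsEnumeration E g)
    (Φ : Set X → Prop) (hΦ : ∀ l, Measurable fun x => Φ (codedSet g l x)) :
    ∃ R : X → X → Prop, IsFinPER E R ∧ (∀ y, R y y → Φ {y' | R y y'}) ∧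
      ∀ (x : X) (T : Set X), T.Finite → T.Nonempty → (∀ y ∈ T, E x y) → Φ T →
        ∃ y ∈ T, R y y := by
  obtain ⟨P, l, hP, hdisj, hcover⟩ := hg.exists_pairwiseDisjoint_codedSet hE
  let P' (n : ℕ) : Set X := {x ∈ P n | Φ (codedSet g (l n) x)}
  have hP' (n : ℕ) : MeasurableSet (P' n) := measurableSet_setOfPred.2 ((hP n).mem.and (hΦ (l n)))
  have hdisj' (n : ℕ) : (P' n).PairwiseDisjoint (codedSet g (l n)) :=
    (hdisj n).subset (sep_subset _ _)
  refine ⟨_, hg.isFinPER_greedyRel hE hP' hdisj', ?_, fun x T hT hne hTE hTΦ => ?_⟩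
  · rintro y ⟨n, x, hx, hy, -⟩
    rw [setOf_greedyRel hdisj' hx hy]
    exact hx.1.2
  · obtain ⟨n, hx, rfl⟩ := hcover x T hT hTE
    exact exists_greedyRel_self (n := n) (P := P') (S := fun n => codedSet g (l n)) ⟨hx, hTΦ⟩ hne

end MaximalFamily

/-! ### Balanced sets -/

/-- The domain of a partial equivalence relation. -/
def relDomain (R : X → X → Prop) : Set X :=
  {x | R x x}

/-- A `G`-saturated set `M` is balanced if its part outside the domain of `G` has at least the size
and at most twice the size of its part inside. -/
structure IsBalanced (ρ : X → X → ℝ) (G : X → X → Prop) (M : Set X) : Prop where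
  saturated : ∀ a ∈ M, ∀ b, G a b → b ∈ M
  inter_le_diff : ∀ z ∈ M, eSize ρ (M ∩ relDomain G) z ≤ eSize ρ (M \ relDomain G) z
  diff_le_two_mul : ∀ z ∈ M, eSize ρ (M \ relDomain G) z ≤ 2 * eSize ρ (M ∩ relDomain G) z

/-- The classes of `R` form a maximal disjoint family of finite `G`-balanced subsets of the
`E`-classes. -/
structure IsMaximalBalanced [MeasurableSpace X] (E : X → X → Prop) (ρ : X → X → ℝ)
    (G R : X → X → Prop) : Prop where
  isFinPER : IsFinPER E R
  isBalanced : ∀ y ∈ relDomain R, IsBalanced ρ G {y' | R y y'}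
  maximal : ∀ (x : X) (T : Set X), T.Finite → T.Nonempty → (∀ y ∈ T, E x y) →
    IsBalanced ρ G T → ∃ y ∈ T, y ∈ relDomain R

/-- The set `A` has `ρ`-density at least `1 / c` in every `G`-class. -/
def IsDenseIn (ρ : X → X → ℝ) (A : Set X) (G : X → X → Prop) (c : ℝ≥0∞) : Prop :=
  ∀ y, eSize ρ {y' | G y y'} y ≤ c * eSize ρ ({y' | G y y'} ∩ A) y

section Balanced

variable [MeasurableSpace X] {E G R : X → X → Prop} {ρ : X → X → ℝ} {x y : X}

theorem IsFinPER.left_mem (hG : IsFinPER E G) (h : G x y) : x ∈ relDomain G :=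
  hG.trans h (hG.symm h)

theorem IsFinPER.right_mem (hG : IsFinPER E G) (h : G x y) : y ∈ relDomain G :=
  hG.left_mem (hG.symm h)

theorem IsFinPER.measurableSet_relDomain (hG : IsFinPER E G) : MeasurableSet (relDomain G) :=
  measurableSet_setOfPred.2 (hG.measurable.comp (measurable_id.prodMk measurable_id))

theorem IsDenseIn.eSize_le_of_saturated (hE : Equivalence E) (hρ : IsCocycle E ρ)
    (hG : IsFinPER E G) {A : Set X} {c : ℝ≥0∞} (hd : IsDenseIn ρ A G c) {z : X} {M : Set X}
    (hM : M.Finite) (hsat : ∀ a ∈ M, ∀ b, G a b → b ∈ M) (hdom : M ⊆ relDomain G)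
    (hEz : ∀ a ∈ M, E z a) : eSize ρ M z ≤ c * eSize ρ (M ∩ A) z := by
  induction hn : M.ncard using Nat.strong_induction_on generalizing M with
  | _ n ih =>
  subst hn
  rcases M.eq_empty_or_nonempty with rfl | ⟨a, ha⟩
  · simp only [eSize_empty, zero_le]
  let C : Set X := {y | G a y}
  have hCM : M ∩ C = C := inter_eq_right.2 fun b hb => hsat a ha b hb
  have hC : eSize ρ C z ≤ c * eSize ρ (C ∩ A) z :=
    hρ.eSize_le_mul_of_le (fun y hy => hE.symm (hG.le hy)) (fun y hy => hE.symm (hG.le hy.1))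
      (hE.symm (hEz a ha)) (hd a)
  have hdiff : eSize ρ (M \ C) z ≤ c * eSize ρ (M \ C ∩ A) z := by
    have hMC : (M ∩ C).Nonempty := ⟨a, ha, hdom ha⟩
    refine ih _ (ncard_lt_ncard (sdiff_ssubset_left_iff.2 hMC) hM) hM.sdiff ?_
      (sdiff_subset.trans hdom) (fun b hb => hEz b hb.1) rfl
    exact fun b hb d hbd =>
      ⟨hsat b hb.1 d hbd, fun had => hb.2 (hG.trans had (hG.symm hbd))⟩
  calc eSize ρ M z = eSize ρ C z + eSize ρ (M \ C) z := by
        rw [← eSize_inter_add_diff ρ M C, hCM]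
    _ ≤ c * eSize ρ (C ∩ A) z + c * eSize ρ (M \ C ∩ A) z := add_le_add hC hdiff
    _ = c * (eSize ρ (M ∩ A ∩ C) z + eSize ρ ((M ∩ A) \ C) z) := by
        rw [mul_add, inter_right_comm, hCM, inter_sdiff_right_comm]
    _ = c * eSize ρ (M ∩ A) z := by rw [eSize_inter_add_diff]

theorem IsMaximalBalanced.isDenseIn (hE : Equivalence E) (hρ : IsCocycle E ρ)
    (hG : IsFinPER E G) (hR : IsMaximalBalanced E ρ G R) {A : Set X} {c : ℝ≥0∞}
    (hd : IsDenseIn ρ A G c) : IsDenseIn ρ A R (3 * c) := by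
  intro y
  let M : Set X := {y' | R y y'}
  rcases M.eq_empty_or_nonempty with hM | ⟨y', hy'⟩
  · change eSize ρ M y ≤ _
    rw [hM, eSize_empty]
    exact zero_le
  have hy : y ∈ relDomain R := hR.isFinPER.left_mem hy'
  have hbal := hR.isBalanced y hy
  have hdom : eSize ρ (M ∩ relDomain G) y ≤ c * eSize ρ (M ∩ relDomain G ∩ A) y :=
    hd.eSize_le_of_saturated hE hρ hG ((hR.isFinPER.finite y).subset inter_subset_left)
      (fun a ha b hab => ⟨hbal.saturated a ha.1 b hab, hG.right_mem hab⟩) inter_subset_right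
      fun a ha => hR.isFinPER.le ha.1
  calc eSize ρ M y = eSize ρ (M ∩ relDomain G) y + eSize ρ (M \ relDomain G) y :=
        (eSize_inter_add_diff ρ _ _ _).symm
    _ ≤ eSize ρ (M ∩ relDomain G) y + 2 * eSize ρ (M ∩ relDomain G) y := by
        gcongr
        exact hbal.diff_le_two_mul y hy
    _ = 3 * eSize ρ (M ∩ relDomain G) y := by ring
    _ ≤ 3 * (c * eSize ρ (M ∩ A) y) := by
        gcongr
        exact hdom.trans (by gcongr; exact eSize_mono ρ (by gcongr; exact inter_subset_left) y)
    _ = 3 * c * eSize ρ (M ∩ A) y := by ring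

variable [StandardBorelSpace X] {g : ℕ → X → X}

theorem IsFinPER.measurable_isBalanced_codedSet (hE : Equivalence E) (hg : IsEnumeration E g)
    (hρ : IsCocycle E ρ) (hG : IsFinPER E G) (l : Finset ℕ) :
    Measurable fun x => IsBalanced ρ G (codedSet g l x) := by
  have hiff (x : X) : IsBalanced ρ G (codedSet g l x) ↔ ∀ i ∈ l,
      (∀ b, E x b → G (g i x) b → b ∈ codedSet g l x) ∧
      eSize ρ {y | y ∈ codedSet g l x ∧ y ∈ relDomain G} (g i x) ≤
        eSize ρ {y | y ∈ codedSet g l x ∧ y ∉ relDomain G} (g i x) ∧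
      eSize ρ {y | y ∈ codedSet g l x ∧ y ∉ relDomain G} (g i x) ≤
        2 * eSize ρ {y | y ∈ codedSet g l x ∧ y ∈ relDomain G} (g i x) := by
    refine ⟨fun h i hi => ?_, fun h => ⟨?_, ?_, ?_⟩⟩
    · have hmem : g i x ∈ codedSet g l x := ⟨i, hi, rfl⟩
      exact ⟨fun b _ => h.saturated _ hmem b, h.inter_le_diff _ hmem, h.diff_le_two_mul _ hmem⟩
    · rintro _ ⟨i, hi, rfl⟩ b hb
      exact (h i hi).1 b (hE.trans (hg.rel_apply i x) (hG.le hb)) hb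
    · rintro _ ⟨i, hi, rfl⟩
      exact (h i hi).2.1
    · rintro _ ⟨i, hi, rfl⟩
      exact (h i hi).2.2
  have hcoded := hg.measurable_mem_codedSet l
  have hdom : Measurable fun p : X × X => p.2 ∈ relDomain G :=
    hG.measurableSet_relDomain.mem.comp measurable_snd
  have hin (i : ℕ) := hg.measurable_eSize hρ (H := fun x y => y ∈ codedSet g l x ∧ y ∈ relDomain G)
    (hcoded.and hdom) measurable_id (hg.measurable i)
    fun _ _ h => hg.rel_of_mem_codedSet h.1
  have hout (i : ℕ) := hg.measurable_eSize hρ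
    (H := fun x y => y ∈ codedSet g l x ∧ y ∉ relDomain G)
    (hcoded.and hdom.not) measurable_id (hg.measurable i)
    fun _ _ h => hg.rel_of_mem_codedSet h.1
  simp only [hiff]
  refine .forall fun i => .forall fun _ => .and ?_ (.and ?_ ?_)
  · exact hg.measurable_forall ((hG.measurable.comp
      (((hg.measurable i).comp measurable_fst).prodMk measurable_snd)).imp hcoded) measurable_id
  · exact measurableSet_setOfPred.1 (measurableSet_le (hin i) (hout i))
  · exact measurableSet_setOfPred.1 (measurableSet_le (hout i) ((hin i).const_mul 2))

theorem IsFinPER.exists_isMaximalBalanced (hE : Equivalence E) (hg : IsEnumeration E g)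
    (hρ : IsCocycle E ρ) (hG : IsFinPER E G) : ∃ R, IsMaximalBalanced E ρ G R :=
  let ⟨R, hR, hbal, hmax⟩ := hg.exists_maximal_isFinPER hE (IsBalanced ρ G)
    (hG.measurable_isBalanced_codedSet hE hg hρ)
  ⟨R, hR, hbal, hmax⟩

end Balanced

/-! ### Compression where the domains increase -/

/-- A sequence of finite Borel partial equivalence relations in which each class of a term is
balanced for the preceding term. -/
structure IsBalancedSeq [MeasurableSpace X] (E : X → X → Prop) (ρ : X → X → ℝ)
    (G : ℕ → X → X → Prop) : Prop where
  isFinPER : ∀ n, IsFinPER E (G n)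
  isBalanced : ∀ n, ∀ y ∈ relDomain (G (n + 1)), IsBalanced ρ (G n) {y' | G (n + 1) y y'}

/-- The union of the `E`-classes on which the domains of the `G n` increase with `n`. -/
def increasingPart (E : X → X → Prop) (G : ℕ → X → X → Prop) : Set X :=
  {x | ∀ n, ∀ y, E x y → y ∈ relDomain (G n) → y ∈ relDomain (G (n + 1))}

/-- The `n`-th layer of the increasing part: the points that enter the domains at stage `n`. -/
def layer (E : X → X → Prop) (G : ℕ → X → X → Prop) (n : ℕ) : Set X :=
  {x | x ∈ increasingPart E G ∧ x ∈ relDomain (G n) ∧ ∀ m < n, x ∉ relDomain (G m)}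

/-- The finite equivalence relation on the increasing part whose classes are the traces of the
`G n`-classes on the `n`-th layer, and single points outside of the layers. -/
def layerRel (E : X → X → Prop) (G : ℕ → X → X → Prop) (x y : X) : Prop :=
  x = y ∨ ∃ n, x ∈ layer E G n ∧ y ∈ layer E G n ∧ G n x y

/-- A promotion maps each point of a layer to a `G (n + 1)`-equivalent point of the next layer, and
fixes all other points. -/
structure IsPromotion (E : X → X → Prop) (G : ℕ → X → X → Prop) (f : X → X) : Prop where
  rel : ∀ x, E x (f x)
  rel_succ : ∀ n, ∀ x ∈ layer E G n, G (n + 1) x (f x)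
  mem_layer_succ : ∀ n, ∀ x ∈ layer E G n, f x ∈ layer E G (n + 1)
  eq_self : ∀ x, (∀ n, x ∉ layer E G n) → f x = x

section Compression

variable {E : X → X → Prop} {ρ : X → X → ℝ} {G : ℕ → X → X → Prop} {f : X → X} {x y : X} {n m : ℕ}

theorem eInvariant_increasingPart (hE : Equivalence E) : EInvariant E (increasingPart E G) :=
  fun _ _ hxy hx n z hz => hx n z (hE.trans hxy hz)

theorem layer_unique (h : x ∈ layer E G n) (h' : x ∈ layer E G m) : n = m :=
  le_antisymm (not_lt.1 fun hlt => h.2.2 m hlt h'.2.1) (not_lt.1 fun hlt => h'.2.2 n hlt h.2.1)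

theorem relDomain_mono_of_mem_increasingPart (hE : Equivalence E) (hx : x ∈ increasingPart E G)
    (hnm : n ≤ m) (h : x ∈ relDomain (G n)) : x ∈ relDomain (G m) := by
  induction hnm with
  | refl => exact h
  | step _ ih => exact hx _ x (hE.refl x) ih

theorem mem_layer_succ_of_notMem (hE : Equivalence E) (hx : x ∈ increasingPart E G)
    (h : x ∈ relDomain (G (n + 1))) (h' : x ∉ relDomain (G n)) : x ∈ layer E G (n + 1) :=
  ⟨hx, h, fun _ hm hxm =>
    h' (relDomain_mono_of_mem_increasingPart hE hx (Nat.lt_succ_iff.1 hm) hxm)⟩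

theorem layerRel.of_mem_layer (h : layerRel E G x y) (hy : y ∈ layer E G n) :
    x ∈ layer E G n ∧ (x = y ∨ G n x y) := by
  rcases h with rfl | ⟨m, hxm, hym, hxy⟩
  · exact ⟨hy, Or.inl rfl⟩
  · obtain rfl := layer_unique hy hym
    exact ⟨hxm, Or.inr hxy⟩

theorem layerRel.eq_of_notMem_layer (h : layerRel E G x y) (hx : ∀ n, x ∉ layer E G n) :
    x = y := by
  rcases h with rfl | ⟨n, hxn, -⟩
  exacts [rfl, (hx n hxn).elim]

variable [MeasurableSpace X]

theorem IsBalancedSeq.layerRel_equivalence (hG : IsBalancedSeq E ρ G) :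
    Equivalence (layerRel E G) where
  refl _ := Or.inl rfl
  symm := by
    rintro x y (rfl | ⟨n, hx, hy, hxy⟩)
    exacts [Or.inl rfl, Or.inr ⟨n, hy, hx, (hG.isFinPER n).symm hxy⟩]
  trans := by
    rintro x y z (rfl | ⟨n, hx, hy, hxy⟩) (rfl | ⟨m, hy', hz, hyz⟩)
    · exact Or.inl rfl
    · exact Or.inr ⟨m, hy', hz, hyz⟩
    · exact Or.inr ⟨n, hx, hy, hxy⟩
    · obtain rfl := layer_unique hy hy'
      exact Or.inr ⟨n, hx, hz, (hG.isFinPER n).trans hxy hyz⟩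

theorem IsBalancedSeq.rel_of_layerRel (hE : Equivalence E) (hG : IsBalancedSeq E ρ G)
    (h : layerRel E G x y) : E x y := by
  rcases h with rfl | ⟨n, -, -, hxy⟩
  exacts [hE.refl x, (hG.isFinPER n).le hxy]

theorem IsBalancedSeq.exists_mem_layer_succ (hE : Equivalence E) (hρ : IsCocycle E ρ)
    (hG : IsBalancedSeq E ρ G) (hx : x ∈ layer E G n) :
    ∃ y, y ∉ relDomain (G n) ∧ G (n + 1) x y := by
  have hdom : x ∈ relDomain (G (n + 1)) := hx.1 n x (hE.refl x) hx.2.1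
  have hpos : 0 < eSize ρ ({y | G (n + 1) x y} \ relDomain (G n)) x :=
    (hρ.eSize_pos (Y := {y | G (n + 1) x y} ∩ relDomain (G n)) ⟨hdom, hx.2.1⟩
      (hE.refl x)).trans_le
      ((hG.isBalanced n x hdom).inter_le_diff x hdom)
  by_contra! hcon
  have hempty : {y | G (n + 1) x y} \ relDomain (G n) = ∅ :=
    eq_empty_of_forall_notMem fun y hy => hcon y hy.2 hy.1
  rw [hempty, eSize_empty] at hpos
  exact hpos.false

theorem IsPromotion.layerRel_map (hE : Equivalence E) (hG : IsBalancedSeq E ρ G)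
    (hf : IsPromotion E G f) (h : layerRel E G x y) : layerRel E G (f x) (f y) := by
  rcases h with rfl | ⟨n, hx, hy, hxy⟩
  · exact Or.inl rfl
  have hG' := hG.isFinPER (n + 1)
  have hdom : x ∈ relDomain (G (n + 1)) := hx.1 n x (hE.refl x) hx.2.1
  have hxy' : G (n + 1) x y := (hG.isBalanced n x hdom).saturated x hdom y hxy
  exact Or.inr ⟨n + 1, hf.mem_layer_succ n x hx, hf.mem_layer_succ n y hy,
    hG'.trans (hG'.symm (hf.rel_succ n x hx)) (hG'.trans hxy' (hf.rel_succ n y hy))⟩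

theorem IsPromotion.of_layerRel (hG : IsBalancedSeq E ρ G) (hf : IsPromotion E G f)
    (h : layerRel E G (f y) x) :
    (y = x ∧ ∀ n, x ∉ layer E G n) ∨
      ∃ n, x ∈ layer E G (n + 1) ∧ y ∈ layer E G n ∧ G (n + 1) x y := by
  by_cases hy : ∃ n, y ∈ layer E G n
  · obtain ⟨n, hy⟩ := hy
    have hG' := hG.isFinPER (n + 1)
    have hfy := hf.mem_layer_succ n y hy
    obtain ⟨hx, hxy⟩ := (hG.layerRel_equivalence.symm h).of_mem_layer hfy
    refine Or.inr ⟨n, hx, hy, ?_⟩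
    have hyf := hG'.symm (hf.rel_succ n y hy)
    rcases hxy with rfl | hxy
    exacts [hyf, hG'.trans hxy hyf]
  · push Not at hy
    rw [hf.eq_self y hy] at h
    obtain rfl := h.eq_of_notMem_layer hy
    exact Or.inl ⟨rfl, hy⟩

theorem IsPromotion.fiber_subset (hG : IsBalancedSeq E ρ G) (hf : IsPromotion E G f)
    (hx : x ∈ layer E G (n + 1)) :
    {y | layerRel E G (f y) x} ⊆ {y | G (n + 1) x y} ∩ relDomain (G n) := by
  intro y hy
  rcases hf.of_layerRel hG hy with ⟨-, hx'⟩ | ⟨m, hx', hym, hxy⟩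
  · exact (hx' _ hx).elim
  · obtain rfl := Nat.succ_injective (layer_unique hx hx')
    exact ⟨hxy, hym.2.1⟩

theorem IsPromotion.fiber_subset_singleton (hG : IsBalancedSeq E ρ G) (hf : IsPromotion E G f)
    (hx : ∀ n, x ∉ layer E G (n + 1)) : {y | layerRel E G (f y) x} ⊆ {x} := by
  intro y hy
  rcases hf.of_layerRel hG hy with ⟨rfl, -⟩ | ⟨n, hx', -⟩
  exacts [rfl, (hx n hx').elim]

theorem IsPromotion.fiber_eq_empty (hG : IsBalancedSeq E ρ G) (hf : IsPromotion E G f)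
    (hx : x ∈ layer E G 0) : {y | layerRel E G (f y) x} = ∅ := by
  refine eq_empty_of_forall_notMem fun y hy => ?_
  rcases hf.of_layerRel hG hy with ⟨-, hx'⟩ | ⟨n, hx', -⟩
  exacts [hx' 0 hx, (Nat.succ_ne_zero n) (layer_unique hx' hx)]

theorem IsPromotion.fiber_finite (hG : IsBalancedSeq E ρ G) (hf : IsPromotion E G f) (x : X) :
    {y | layerRel E G (f y) x}.Finite := by
  by_cases hx : ∃ n, x ∈ layer E G (n + 1)
  · obtain ⟨n, hx⟩ := hx
    exact ((hG.isFinPER (n + 1)).finite x).subset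
      ((hf.fiber_subset hG hx).trans inter_subset_left)
  · exact (finite_singleton x).subset (hf.fiber_subset_singleton hG (not_exists.1 hx))

theorem IsPromotion.eSize_fiber_le (hE : Equivalence E) (hG : IsBalancedSeq E ρ G)
    (hf : IsPromotion E G f) (x : X) :
    eSize ρ {y | layerRel E G (f y) x} x ≤ eSize ρ {y | layerRel E G y x} x := by
  by_cases hx : ∃ n, x ∈ layer E G (n + 1)
  · obtain ⟨n, hx⟩ := hx
    have hG' := hG.isFinPER (n + 1)
    calc eSize ρ {y | layerRel E G (f y) x} x
        ≤ eSize ρ ({y | G (n + 1) x y} ∩ relDomain (G n)) x :=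
          eSize_mono ρ (hf.fiber_subset hG hx) x
      _ ≤ eSize ρ ({y | G (n + 1) x y} \ relDomain (G n)) x :=
          (hG.isBalanced n x hx.2.1).inter_le_diff x hx.2.1
      _ ≤ eSize ρ {y | layerRel E G y x} x := eSize_mono ρ (fun y hy => Or.inr ⟨n + 1,
          mem_layer_succ_of_notMem hE (eInvariant_increasingPart hE (hG'.le hy.1) hx.1)
            (hG'.right_mem hy.1) hy.2, hx, hG'.symm hy.1⟩) x
  · refine eSize_mono ρ ((hf.fiber_subset_singleton hG (not_exists.1 hx)).trans ?_) x
    exact singleton_subset_iff.2 (Or.inl rfl)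

variable {g : ℕ → X → X}

theorem IsBalancedSeq.measurableSet_increasingPart (hg : IsEnumeration E g)
    (hG : IsBalancedSeq E ρ G) : MeasurableSet (increasingPart E G) := by
  have hdom (n : ℕ) : Measurable fun p : X × X => p.2 ∈ relDomain (G n) :=
    (hG.isFinPER n).measurableSet_relDomain.mem.comp measurable_snd
  exact measurableSet_setOfPred.2 (.forall fun n =>
    hg.measurable_forall ((hdom n).imp (hdom (n + 1))) measurable_id)

theorem IsBalancedSeq.measurableSet_layer (hg : IsEnumeration E g) (hG : IsBalancedSeq E ρ G)
    (n : ℕ) : MeasurableSet (layer E G n) :=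
  measurableSet_setOfPred.2 ((hG.measurableSet_increasingPart hg).mem.and
    ((hG.isFinPER n).measurableSet_relDomain.mem.and (.forall fun m => .forall fun _ =>
      (hG.isFinPER m).measurableSet_relDomain.mem.not)))

variable [StandardBorelSpace X]

theorem IsBalancedSeq.isFinSubequivOn_layerRel (hg : IsEnumeration E g)
    (hG : IsBalancedSeq E ρ G) : IsFinSubequivOn E (increasingPart E G) (layerRel E G) := by
  have hlayer (n : ℕ) := (hG.measurableSet_layer hg n).mem
  refine ⟨hG.layerRel_equivalence, ?_, ?_, fun x => ?_⟩
  · exact measurableSet_setOfPred.2 ((measurable_fst.eq measurable_snd).or (.exists fun n =>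
      ((hlayer n).comp measurable_fst).and
        (((hlayer n).comp measurable_snd).and (hG.isFinPER n).measurable)))
  · rintro x y (rfl | ⟨n, hx, hy, hxy⟩)
    exacts [Or.inl rfl, Or.inr ⟨(hG.isFinPER n).le hxy, hx.1, hy.1⟩]
  · by_cases hx : ∃ n, x ∈ layer E G n
    · obtain ⟨n, hx⟩ := hx
      refine ((hG.isFinPER n).finite x).subset fun y hy => ?_
      rcases ((hG.layerRel_equivalence.symm hy).of_mem_layer hx).2 with rfl | hyx
      exacts [hx.2.1, (hG.isFinPER n).symm hyx]
    · exact (finite_singleton x).subset fun y hy =>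
        (layerRel.eq_of_notMem_layer hy (not_exists.1 hx)).symm

theorem IsBalancedSeq.exists_isPromotion (hE : Equivalence E) (hg : IsEnumeration E g)
    (hρ : IsCocycle E ρ) (hG : IsBalancedSeq E ρ G) : ∃ f, Measurable f ∧ IsPromotion E G f := by
  let Q (x y : X) : Prop := ∃ n, x ∈ layer E G n ∧ y ∉ relDomain (G n) ∧ G (n + 1) x y
  have hQ : Measurable fun p : X × X => Q p.1 p.2 := .exists fun n =>
    ((hG.measurableSet_layer hg n).mem.comp measurable_fst).and
      (((hG.isFinPER n).measurableSet_relDomain.mem.comp measurable_snd).not.and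
        (hG.isFinPER (n + 1)).measurable)
  obtain ⟨f, hf, hfE, hfQ⟩ := hg.exists_measurable_selector_or_self hE hQ
  have hpromote (n : ℕ) (x : X) (hx : x ∈ layer E G n) :
      f x ∉ relDomain (G n) ∧ G (n + 1) x (f x) := by
    obtain ⟨y, hy, hxy⟩ := hG.exists_mem_layer_succ hE hρ hx
    obtain ⟨m, hxm, hfx⟩ := (hfQ x).resolve_right fun h =>
      h.2 y ((hG.isFinPER _).le hxy) ⟨n, hx, hy, hxy⟩
    obtain rfl := layer_unique hx hxm
    exact hfx
  refine ⟨f, hf, hfE, fun n x hx => (hpromote n x hx).2, fun n x hx => ?_, fun x hx => ?_⟩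
  · obtain ⟨hdom, hxf⟩ := hpromote n x hx
    exact mem_layer_succ_of_notMem hE (eInvariant_increasingPart hE (hfE x) hx.1)
      ((hG.isFinPER _).right_mem hxf) hdom
  · rcases hfQ x with ⟨n, hxn, -⟩ | h
    exacts [(hx n hxn).elim, h.1]

theorem IsBalancedSeq.exists_compression (hE : Equivalence E) (hg : IsEnumeration E g)
    (hρ : IsCocycle E ρ) (hG : IsBalancedSeq E ρ G)
    (hcomplete : ∀ x, ∃ y ∈ relDomain (G 0), E x y) :
    ∃ (F : X → X → Prop) (hF : Equivalence F), IsFinSubequivOn E (increasingPart E G) F ∧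
      ∃ φ : Quotient (Setoid.mk F hF) → Quotient (Setoid.mk F hF),
        Measurable φ ∧ (∀ C, (φ ⁻¹' {C}).Finite) ∧
        QuotCompressionOn E ρ (increasingPart E G) (Setoid.mk F hF) φ := by
  obtain ⟨f, hf, hprom⟩ := hG.exists_isPromotion hE hg hρ
  refine ⟨layerRel E G, hG.layerRel_equivalence, hG.isFinSubequivOn_layerRel hg, ?_⟩
  let s : Setoid X := Setoid.mk (layerRel E G) hG.layerRel_equivalence
  let φ : Quotient s → Quotient s := Quotient.map f fun _ _ => hprom.layerRel_map hE hG
  have hφ (x y : X) : φ (Quotient.mk s x) = Quotient.mk s y ↔ layerRel E G (f x) y :=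
    Quotient.eq (r := s)
  have hinv : EInvariant E (increasingPart E G) := eInvariant_increasingPart hE
  have hfiber (x : X) : {y | y ∈ increasingPart E G ∧ φ (Quotient.mk s y) = Quotient.mk s x} ⊆
      {y | layerRel E G (f y) x} := fun y hy => (hφ y x).1 hy.2
  refine ⟨φ, ?_, fun C => ?_, fun x hx y hxy => ?_, fun x _ => ?_, fun x hx => ?_⟩
  · exact measurable_from_quotient.2 ((measurable_quotient_mk'' (s := s)).comp hf)
  · obtain ⟨x, rfl⟩ := Quotient.exists_rep C
    refine ((hprom.fiber_finite hG x).image (Quotient.mk s)).subset fun q hq => ?_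
    obtain ⟨y, rfl⟩ := Quotient.exists_rep q
    exact ⟨y, (hφ y x).1 hq, rfl⟩
  · have hE' := hE.trans (hprom.rel x) (hG.rel_of_layerRel hE ((hφ x y).1 hxy))
    exact ⟨hE', hinv hE' hx⟩
  · refine ENNReal.div_le_of_le_mul ?_
    rw [one_mul]
    exact (eSize_mono ρ (hfiber x) x).trans (hprom.eSize_fiber_le hE hG x)
  · obtain ⟨y, hy, hxy⟩ := hcomplete x
    have hy0 : y ∈ layer E G 0 := ⟨hinv hxy hx, hy, fun m hm => (Nat.not_lt_zero m hm).elim⟩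
    refine ⟨y, hinv hxy hx, hxy, ?_⟩
    have hempty := subset_eq_empty (hfiber y) (hprom.fiber_eq_empty hG hy0)
    rw [relSize, hempty, eSize_empty, ENNReal.zero_div]
    exact zero_lt_one

end Compression

/-! ### Leftover points -/

/-- The `ρ`-size of the `G`-class of `p` relative to the point `z`. -/
noncomputable def classSize (ρ : X → X → ℝ) (G : X → X → Prop) (p z : X) : ℝ≥0∞ :=
  eSize ρ {y | G p y} z

/-- The points of the domain of `G` left over by `R`. -/
def leftoverInside (G R : X → X → Prop) : Set X :=
  relDomain G \ relDomain R

/-- The points outside of the domain of `G` left over by `R`. -/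
def leftoverOutside (G R : X → X → Prop) : Set X :=
  (relDomain G)ᶜ \ relDomain R

/-- The leftover outside points which are at most as large as the `G`-class of `p`. -/
def fittingPoints (E : X → X → Prop) (ρ : X → X → ℝ) (G R : X → X → Prop) (p : X) : Set X :=
  {l | E p l ∧ l ∈ leftoverOutside G R ∧ 1 ≤ classSize ρ G p l}

section Leftover

variable [MeasurableSpace X] {E G R : X → X → Prop} {ρ : X → X → ℝ} {p q l z : X}

theorem IsFinPER.setOf_rel_eq (hG : IsFinPER E G) (h : G p q) : {y | G p y} = {y | G q y} :=
  ext fun _ => ⟨hG.trans (hG.symm h), hG.trans h⟩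

theorem IsFinPER.classSize_ne_top (hG : IsFinPER E G) : classSize ρ G p z ≠ ⊤ :=
  eSize_ne_top ρ (hG.finite p) z

theorem IsFinPER.one_le_classSize_iff (hE : Equivalence E) (hρ : IsCocycle E ρ)
    (hG : IsFinPER E G) (hp : E p l) (hz : E l z) :
    1 ≤ classSize ρ G p l ↔ ENNReal.ofReal (ρ l z) ≤ classSize ρ G p z := by
  have hbase : classSize ρ G p z = classSize ρ G p l * ENNReal.ofReal (ρ l z) :=
    hρ.eSize_eq_mul (fun w hw => hE.trans (hE.symm (hG.le hw)) hp) hz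
  rw [hbase, ← ENNReal.mul_le_mul_iff_left (hρ.ofReal_pos hz).ne' ofReal_ne_top, one_mul]

theorem IsFinPER.fittingPoints_eq (hE : Equivalence E) (hG : IsFinPER E G) (h : G p q) :
    fittingPoints E ρ G R p = fittingPoints E ρ G R q := by
  ext l
  have hpq : E p l ↔ E q l := ⟨hE.trans (hE.symm (hG.le h)), hE.trans (hG.le h)⟩
  simp only [fittingPoints, mem_ofPred_eq, classSize, hG.setOf_rel_eq h, hpq]

theorem IsFinPER.ofReal_le_classSize (hE : Equivalence E) (hρ : IsCocycle E ρ)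
    (hG : IsFinPER E G) (hl : l ∈ fittingPoints E ρ G R p) :
    ENNReal.ofReal (ρ l p) ≤ classSize ρ G p p :=
  (hG.one_le_classSize_iff hE hρ hl.1 (hE.symm hl.1)).1 hl.2.2

theorem IsFinPER.fittingPoints_total (hE : Equivalence E) (hρ : IsCocycle E ρ)
    (hG : IsFinPER E G) (h : E p q) : fittingPoints E ρ G R p ⊆ fittingPoints E ρ G R q ∨
      fittingPoints E ρ G R q ⊆ fittingPoints E ρ G R p := by
  refine (le_total (classSize ρ G p p) (classSize ρ G q p)).imp (fun hle l hl => ?_)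
    fun hle l hl => ?_
  · have hql := hE.trans (hE.symm h) hl.1
    exact ⟨hql, hl.2.1, (hG.one_le_classSize_iff hE hρ hql (hE.symm hl.1)).2
      ((hG.ofReal_le_classSize hE hρ hl).trans hle)⟩
  · have hpl := hE.trans h hl.1
    exact ⟨hpl, hl.2.1, (hG.one_le_classSize_iff hE hρ hpl (hE.symm hpl)).2
      (((hG.one_le_classSize_iff hE hρ hl.1 (hE.symm hpl)).1 hl.2.2).trans hle)⟩

theorem IsMaximalBalanced.mem_leftoverInside (hG : IsFinPER E G) (hR : IsMaximalBalanced E ρ G R)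
    (hp : p ∈ leftoverInside G R) (h : G p q) : q ∈ leftoverInside G R :=
  ⟨hG.right_mem h, fun hq =>
    hp.2 (hR.isFinPER.right_mem ((hR.isBalanced q hq).saturated q hq p (hG.symm h)))⟩

/-- Otherwise `S ∪ T` would be balanced, contrary to the maximality of `R`. -/
theorem IsMaximalBalanced.two_mul_eSize_lt (hE : Equivalence E) (hρ : IsCocycle E ρ)
    (hG : IsFinPER E G) (hR : IsMaximalBalanced E ρ G R) {S T : Set X} (hS : S.Finite)
    (hT : T.Finite) (hne : (S ∪ T).Nonempty) (hSin : S ⊆ leftoverInside G R)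
    (hSsat : ∀ a ∈ S, ∀ b, G a b → b ∈ S) (hTout : T ⊆ leftoverOutside G R)
    (hSE : ∀ a ∈ S, E z a) (hTE : ∀ a ∈ T, E z a) (hle : eSize ρ S z ≤ eSize ρ T z) :
    2 * eSize ρ S z < eSize ρ T z := by
  by_contra! hle'
  have hE' : ∀ a ∈ S ∪ T, E z a := fun a ha => ha.elim (hSE a) (hTE a)
  have hin : (S ∪ T) ∩ relDomain G = S := by
    rw [union_inter_distrib_right, inter_eq_left.2 fun a ha => (hSin ha).1,
      disjoint_iff_inter_eq_empty.1 (disjoint_left.2 fun a ha => (hTout ha).1), union_empty]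
  have hout : (S ∪ T) \ relDomain G = T := by
    rw [union_sdiff_distrib, sdiff_eq_empty.2 fun a ha => (hSin ha).1, empty_union,
      sdiff_eq_left.2 (disjoint_left.2 fun a ha => (hTout ha).1)]
  obtain ⟨y, hy, hyR⟩ := hR.maximal z (S ∪ T) (hS.union hT) hne hE' {
    saturated := by
      rintro a (ha | ha) b hab
      exacts [Or.inl (hSsat a ha b hab), ((hTout ha).1 (hG.left_mem hab)).elim]
    inter_le_diff := fun w hw => by
      rw [hin, hout]
      simpa only [one_mul] using hρ.eSize_le_mul_of_le (c := 1) (fun a ha => hE.symm (hSE a ha))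
        (fun a ha => hE.symm (hTE a ha)) (hE' w hw) (by rwa [one_mul])
    diff_le_two_mul := fun w hw => by
      rw [hin, hout]
      exact hρ.eSize_le_mul_of_le (fun a ha => hE.symm (hTE a ha))
        (fun a ha => hE.symm (hSE a ha)) (hE' w hw) hle' }
  exact hy.elim (fun h => (hSin h).2 hyR) fun h => (hTout h).2 hyR

theorem IsMaximalBalanced.eSize_lt_half (hE : Equivalence E) (hρ : IsCocycle E ρ)
    (hG : IsFinPER E G) (hR : IsMaximalBalanced E ρ G R) (hl : l ∈ leftoverOutside G R) {S : Set X}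
    (hS : S.Finite) (hSin : S ⊆ leftoverInside G R) (hSsat : ∀ a ∈ S, ∀ b, G a b → b ∈ S)
    (hSE : ∀ a ∈ S, E l a) (hle : eSize ρ S l ≤ 1) : eSize ρ S l < 1 / 2 := by
  have hone : eSize ρ {l} l = 1 := by
    rw [eSize_singleton, hρ.apply_self (hE.refl l), ofReal_one]
  have hlt := hR.two_mul_eSize_lt hE hρ hG hS (finite_singleton l) ⟨l, Or.inr rfl⟩ hSin hSsat
    (singleton_subset_iff.2 hl) hSE (fun a ha => ha ▸ hE.refl l) (hle.trans_eq hone.symm)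
  rwa [hone, mul_comm, ← ENNReal.lt_div_iff_mul_lt (Or.inl two_ne_zero) (Or.inl ofNat_ne_top)]
    at hlt

/-- By induction on the number of classes: adding a class to a union of size less than `1 / 2` gives
a union of size at most `1`, hence less than `1 / 2`. -/
theorem IsMaximalBalanced.eSize_biUnion_lt_half (hE : Equivalence E) (hρ : IsCocycle E ρ)
    (hG : IsFinPER E G) (hR : IsMaximalBalanced E ρ G R) (hl : l ∈ leftoverOutside G R)
    (h : ∀ p ∈ leftoverInside G R, l ∉ fittingPoints E ρ G R p) (t : Finset X)
    (ht : ∀ a ∈ t, E l a ∧ a ∈ leftoverInside G R) :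
    eSize ρ (⋃ a ∈ t, {y | G a y}) l < 1 / 2 := by
  classical
  induction t using Finset.induction_on with
  | empty => simp [eSize_empty]
  | insert a t _ ih =>
    have ha := ht a (Finset.mem_insert_self a t)
    have hclass : eSize ρ {y | G a y} l < 1 := not_le.1 fun hle =>
      h a ha.2 ⟨hE.symm ha.1, hl, hle⟩
    have hclass' : eSize ρ {y | G a y} l < 1 / 2 :=
      hR.eSize_lt_half hE hρ hG hl (hG.finite a) (fun y hy => hR.mem_leftoverInside hG ha.2 hy)
        (fun y hy w hw => hG.trans hy hw) (fun y hy => hE.trans ha.1 (hG.le hy)) hclass.le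
    refine hR.eSize_lt_half hE hρ hG hl
      ((insert a t).finite_toSet.biUnion fun b _ => hG.finite b) (fun y hy => ?_)
      (fun y hy w hyw => ?_) (fun y hy => ?_) ?_
    · obtain ⟨b, hb, hby⟩ := mem_iUnion₂.1 hy
      exact hR.mem_leftoverInside hG (ht b hb).2 hby
    · obtain ⟨b, hb, hby⟩ := mem_iUnion₂.1 hy
      exact mem_iUnion₂.2 ⟨b, hb, hG.trans hby hyw⟩
    · obtain ⟨b, hb, hby⟩ := mem_iUnion₂.1 hy
      exact hE.trans (ht b hb).1 (hG.le hby)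
    · calc eSize ρ (⋃ b ∈ insert a t, {y | G b y}) l
          = eSize ρ ({y | G a y} ∪ ⋃ b ∈ t, {y | G b y}) l := by
            rw [Finset.set_biUnion_insert]
        _ ≤ eSize ρ {y | G a y} l + eSize ρ (⋃ b ∈ t, {y | G b y}) l := eSize_union_le ρ _ _ l
        _ ≤ 1 / 2 + 1 / 2 :=
            add_le_add hclass'.le (ih fun b hb => ht b (Finset.mem_insert_of_mem hb)).le
        _ = 1 := ENNReal.add_halves 1

theorem IsMaximalBalanced.eSize_leftoverInside_le_half (hE : Equivalence E) (hρ : IsCocycle E ρ)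
    (hG : IsFinPER E G) (hR : IsMaximalBalanced E ρ G R) (hl : l ∈ leftoverOutside G R)
    (h : ∀ p ∈ leftoverInside G R, l ∉ fittingPoints E ρ G R p) :
    eSize ρ {y | E l y ∧ y ∈ leftoverInside G R} l ≤ 1 / 2 := by
  refine eSize_le_of_forall_finset fun t ht => ?_
  have hsub : (t : Set X) ⊆ ⋃ a ∈ t, {y | G a y} := fun a ha =>
    mem_iUnion₂.2 ⟨a, ha, (ht ha).2.1⟩
  exact (eSize_mono ρ hsub l).trans
    (hR.eSize_biUnion_lt_half hE hρ hG hl h t fun a ha => ht ha).le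

theorem IsMaximalBalanced.eSize_fittingPoints_le (hE : Equivalence E) (hρ : IsCocycle E ρ)
    (hG : IsFinPER E G) (hR : IsMaximalBalanced E ρ G R) (hp : p ∈ leftoverInside G R) :
    eSize ρ (fittingPoints E ρ G R p) p ≤ classSize ρ G p p := by
  classical
  have hlt (t : Finset X) (ht : ↑t ⊆ fittingPoints E ρ G R p) :
      eSize ρ t p < classSize ρ G p p := by
    induction t using Finset.induction_on with
    | empty =>
      rw [Finset.coe_empty, eSize_empty]
      exact hρ.eSize_pos (Y := {y | G p y}) hp.1 (hE.refl p)
    | insert a t _ ih =>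
      rw [Finset.coe_insert, insert_subset_iff] at ht
      by_contra! hle
      refine (hR.two_mul_eSize_lt hE hρ hG (hG.finite p) (insert a t).finite_toSet
        ⟨p, Or.inl hp.1⟩ (fun b hb => hR.mem_leftoverInside hG hp hb)
        (fun b hb c hc => hG.trans hb hc) (fun b hb => ?_) (fun b hb => hG.le hb)
        (fun b hb => ?_) hle).not_ge ?_
      · exact (insert_subset ht.1 ht.2 (Finset.coe_insert a t ▸ hb)).2.1
      · exact (insert_subset ht.1 ht.2 (Finset.coe_insert a t ▸ hb)).1
      · calc eSize ρ ↑(insert a t) p = eSize ρ ({a} ∪ ↑t) p := by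
              rw [Finset.coe_insert, insert_eq]
          _ ≤ eSize ρ {a} p + eSize ρ t p := eSize_union_le ρ _ _ p
          _ ≤ classSize ρ G p p + classSize ρ G p p := by
              rw [eSize_singleton]
              exact add_le_add (hG.ofReal_le_classSize hE hρ ht.1) (ih ht.2).le
          _ = 2 * classSize ρ G p p := (two_mul _).symm
  exact eSize_le_of_forall_finset fun t ht => (hlt t ht).le

theorem IsMaximalBalanced.eSize_fittingPoints_ne_top (hE : Equivalence E) (hρ : IsCocycle E ρ)
    (hG : IsFinPER E G) (hR : IsMaximalBalanced E ρ G R) (hp : p ∈ leftoverInside G R) :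
    eSize ρ (fittingPoints E ρ G R p) p ≠ ⊤ :=
  ne_top_of_le_ne_top hG.classSize_ne_top (hR.eSize_fittingPoints_le hE hρ hG hp)

/-- The points which fit `p` but not `q` are larger than the `G`-class of `q`. -/
theorem IsMaximalBalanced.finite_fittingPoints_diff (hE : Equivalence E) (hρ : IsCocycle E ρ)
    (hG : IsFinPER E G) (hR : IsMaximalBalanced E ρ G R) (hp : p ∈ leftoverInside G R)
    (hq : q ∈ leftoverInside G R) (hpq : E p q) :
    (fittingPoints E ρ G R p \ fittingPoints E ρ G R q).Finite := by
  have hpos : classSize ρ G q p ≠ 0 :=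
    (hρ.eSize_pos (Y := {y | G q y}) hq.1 (hE.symm hpq)).ne'
  refine ((ENNReal.finite_const_le_of_tsum_ne_top
    (hR.eSize_fittingPoints_ne_top hE hρ hG hp) hpos).image Subtype.val).subset ?_
  rintro l ⟨hl, hlq⟩
  have hql := hE.trans (hE.symm hpq) hl.1
  have hle : classSize ρ G q p ≤ ENNReal.ofReal (ρ l p) := le_of_not_ge fun hle =>
    hlq ⟨hql, hl.2.1, (hG.one_le_classSize_iff hE hρ hql (hE.symm hl.1)).2 hle⟩
  exact ⟨⟨l, hl⟩, hle, rfl⟩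

end Leftover

/-! ### Absorption of the leftover points -/

/-- Among the leftover `G`-classes that `l` fits, the class of `p` is one that is fitted by the
fewest points. -/
def IsBestFit (E : X → X → Prop) (ρ : X → X → ℝ) (G R : X → X → Prop) (l p : X) : Prop :=
  p ∈ leftoverInside G R ∧ l ∈ fittingPoints E ρ G R p ∧
    ∀ q, E l q → q ∈ leftoverInside G R → l ∈ fittingPoints E ρ G R q →
      fittingPoints E ρ G R p ⊆ fittingPoints E ρ G R q

/-- The leftover outside points that fit every leftover `G`-class in their `E`-class. -/
def smallLeftover (E : X → X → Prop) (ρ : X → X → ℝ) (G R : X → X → Prop) : Set X :=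
  {l | l ∈ leftoverOutside G R ∧
    ∀ p, E l p → p ∈ leftoverInside G R → l ∈ fittingPoints E ρ G R p}

/-- The union of the `E`-classes in which the leftover inside points, or the points of
`smallLeftover`, form a set of positive finite `ρ`-size. -/
def exceptionalPart (E : X → X → Prop) (ρ : X → X → ℝ) (G R : X → X → Prop) : Set X :=
  finiteSizePart E ρ (leftoverInside G R) ∪ finiteSizePart E ρ (smallLeftover E ρ G R)

/-- The union of the `E`-classes in which the leftover outside points can be absorbed into the
leftover `G`-classes: the classes off the exceptional part that contain a leftover `G`-class. -/
def absorbablePart (E : X → X → Prop) (ρ : X → X → ℝ) (G R : X → X → Prop) : Set X :=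
  {x | ∃ y, E x y ∧ y ∈ leftoverInside G R} \ exceptionalPart E ρ G R

/-- An absorption assigns a best fit to each leftover outside point of the absorbable part, and
fixes the domain of `G`. -/
structure IsAbsorption (E : X → X → Prop) (ρ : X → X → ℝ) (G R : X → X → Prop) (h : X → X) :
    Prop where
  eq_self : ∀ x ∈ relDomain G, h x = x
  isBestFit : ∀ l ∈ absorbablePart E ρ G R, l ∈ leftoverOutside G R → IsBestFit E ρ G R l (h l)

/-- The finite equivalence relation on the absorbable part whose classes are the `R`-classes, and
the leftover `G`-classes together with the points that `h` assigns to them. -/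
def absorbRel (E : X → X → Prop) (ρ : X → X → ℝ) (G R : X → X → Prop) (h : X → X) (x y : X) :
    Prop :=
  x = y ∨ x ∈ absorbablePart E ρ G R ∧ y ∈ absorbablePart E ρ G R ∧
    (R x y ∨ x ∉ relDomain R ∧ y ∉ relDomain R ∧ G (h x) (h y))

section Absorption

variable {E G R : X → X → Prop} {ρ : X → X → ℝ} {p q l x y : X} {h : X → X}

theorem mem_leftover_or (hx : x ∉ relDomain R) :
    x ∈ leftoverInside G R ∨ x ∈ leftoverOutside G R :=
  (em (x ∈ relDomain G)).imp (fun h => ⟨h, hx⟩) fun h => ⟨h, hx⟩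

theorem IsAbsorption.mem_leftoverInside (hh : IsAbsorption E ρ G R h)
    (hx : x ∈ absorbablePart E ρ G R) (hxR : x ∉ relDomain R) : h x ∈ leftoverInside G R := by
  rcases mem_leftover_or hxR with hin | hout
  exacts [(hh.eq_self x hin.1).symm ▸ hin, (hh.isBestFit x hx hout).1]

theorem IsAbsorption.rel (hE : Equivalence E) (hh : IsAbsorption E ρ G R h)
    (hx : x ∈ absorbablePart E ρ G R) (hxR : x ∉ relDomain R) : E x (h x) := by
  rcases mem_leftover_or hxR with hin | hout
  exacts [(hh.eq_self x hin.1).symm ▸ hE.refl x, hE.symm (hh.isBestFit x hx hout).2.1.1]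

variable [MeasurableSpace X]

theorem IsBestFit.of_rel (hl : IsBestFit E ρ G R l p) (hE : Equivalence E) (hG : IsFinPER E G)
    (hR : IsMaximalBalanced E ρ G R) (h : G p q) : IsBestFit E ρ G R l q := by
  have hfit := hG.fittingPoints_eq (ρ := ρ) (R := R) hE h
  exact ⟨hR.mem_leftoverInside hG hl.1 h, hfit ▸ hl.2.1, hfit ▸ hl.2.2⟩

theorem IsMaximalBalanced.exists_isBestFit (hE : Equivalence E) (hρ : IsCocycle E ρ)
    (hG : IsFinPER E G) (hR : IsMaximalBalanced E ρ G R) (hp : p ∈ leftoverInside G R)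
    (hlp : l ∈ fittingPoints E ρ G R p) (hq : q ∈ leftoverInside G R) (hlE : E l q)
    (hlq : l ∉ fittingPoints E ρ G R q) : ∃ p', IsBestFit E ρ G R l p' := by
  let fit (a : X) : Set X := fittingPoints E ρ G R a
  obtain ⟨p', ⟨hp', hlp'⟩, hmin⟩ := exists_minimalFor_of_wellFoundedLT
    (fun a => a ∈ leftoverInside G R ∧ l ∈ fit a) (fun a => (fit a \ fit q).ncard) ⟨p, hp, hlp⟩
  refine ⟨p', hp', hlp', fun a hla ha hfit => ?_⟩
  have hsub : fit q ⊆ fit a :=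
    (hG.fittingPoints_total hE hρ (hE.trans (hE.symm hlE) hla)).resolve_right
      fun hsub => hlq (hsub hfit)
  refine (hG.fittingPoints_total hE hρ (hE.trans hlp'.1 hla)).elim id fun hap' => ?_
  have hfin : (fit p' \ fit q).Finite :=
    hR.finite_fittingPoints_diff hE hρ hG hp' hq (hE.trans hlp'.1 hlE)
  have hdiff : fit a \ fit q ⊆ fit p' \ fit q := sdiff_subset_sdiff_left hap'
  have heq : fit a \ fit q = fit p' \ fit q := eq_of_subset_of_ncard_le hdiff
    (hmin ⟨ha, hfit⟩ (ncard_le_ncard hdiff hfin)) hfin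
  intro b hb
  by_cases hbq : b ∈ fit q
  · exact hsub hbq
  · exact (heq.superset ⟨hb, hbq⟩).1

/-- If the class of `q` is too small for `l`, it is too small for every point with the same best fit
as `l`. -/
theorem IsMaximalBalanced.finite_setOf_isBestFit (hE : Equivalence E) (hρ : IsCocycle E ρ)
    (hG : IsFinPER E G) (hR : IsMaximalBalanced E ρ G R) (hl : IsBestFit E ρ G R l p)
    (hq : q ∈ leftoverInside G R) (hlE : E l q) (hlq : l ∉ fittingPoints E ρ G R q) :
    {l' | IsBestFit E ρ G R l' p}.Finite := by
  have hpq := hE.trans hl.2.1.1 hlE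
  refine (hR.finite_fittingPoints_diff hE hρ hG hl.1 hq hpq).subset fun l' hl' => ⟨hl'.2.1, ?_⟩
  exact fun hl'q => hlq (hl'.2.2 q (hE.trans (hE.symm hl'.2.1.1) hpq) hq hl'q hl.2.1)

theorem IsMaximalBalanced.exists_mem_fittingPoints (hE : Equivalence E) (hρ : IsCocycle E ρ)
    (hG : IsFinPER E G) (hR : IsMaximalBalanced E ρ G R) (hl : l ∈ absorbablePart E ρ G R)
    (hlout : l ∈ leftoverOutside G R) :
    ∃ p ∈ leftoverInside G R, l ∈ fittingPoints E ρ G R p := by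
  by_contra! hcon
  obtain ⟨⟨y, hly, hy⟩, hexc⟩ := hl
  refine hexc (Or.inl ⟨?_, ?_⟩)
  · exact (hρ.eSize_pos (Y := {y | E l y ∧ y ∈ leftoverInside G R}) ⟨hly, hy⟩ (hE.symm hly)).ne'
  · exact ne_top_of_le_ne_top (ENNReal.div_ne_top one_ne_top two_ne_zero)
      (hR.eSize_leftoverInside_le_half hE hρ hG hlout hcon)

theorem IsMaximalBalanced.exists_notMem_fittingPoints (hE : Equivalence E) (hρ : IsCocycle E ρ)
    (hG : IsFinPER E G) (hR : IsMaximalBalanced E ρ G R) (hl : l ∈ absorbablePart E ρ G R)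
    (hlout : l ∈ leftoverOutside G R) :
    ∃ q ∈ leftoverInside G R, E l q ∧ l ∉ fittingPoints E ρ G R q := by
  by_contra! hcon
  obtain ⟨p, hp, hlp⟩ := hR.exists_mem_fittingPoints hE hρ hG hl hlout
  let V : Set X := {y | E l y ∧ y ∈ smallLeftover E ρ G R}
  have hVfit : V ⊆ fittingPoints E ρ G R p := fun y hy =>
    hy.2.2 p (hE.trans (hE.symm hy.1) (hE.symm hlp.1)) hp
  have hlV : l ∈ V := ⟨hE.refl l, hlout, fun q hlq hq => hcon q hq hlq⟩
  refine hl.2 (Or.inr ⟨(hρ.eSize_pos hlV (hE.refl l)).ne', ?_⟩)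
  rw [hρ.eSize_eq_mul (Y := V) (fun y hy => hE.symm (hVfit hy).1) hlp.1]
  exact ENNReal.mul_ne_top (ne_top_of_le_ne_top (hR.eSize_fittingPoints_ne_top hE hρ hG hp)
    (eSize_mono ρ hVfit p)) ofReal_ne_top

theorem eInvariant_exceptionalPart (hE : Equivalence E) (hρ : IsCocycle E ρ)
    (G R : X → X → Prop) : EInvariant E (exceptionalPart E ρ G R) := fun _ _ hxy hx =>
  hx.imp (eInvariant_finiteSizePart hE hρ _ hxy) (eInvariant_finiteSizePart hE hρ _ hxy)

theorem eInvariant_absorbablePart (hE : Equivalence E) (hρ : IsCocycle E ρ) (G R : X → X → Prop) :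
    EInvariant E (absorbablePart E ρ G R) := by
  rintro x y hxy ⟨⟨z, hxz, hz⟩, hexc⟩
  exact ⟨⟨z, hE.trans (hE.symm hxy) hxz, hz⟩,
    fun hy => hexc (eInvariant_exceptionalPart hE hρ G R (hE.symm hxy) hy)⟩

theorem absorbRel_equivalence (hG : IsFinPER E G) (hR : IsFinPER E R) (h : X → X) :
    Equivalence (absorbRel E ρ G R h) where
  refl _ := Or.inl rfl
  symm := by
    rintro x y (rfl | ⟨hx, hy, hxy⟩)
    · exact Or.inl rfl
    · exact Or.inr ⟨hy, hx,
        hxy.imp (fun hxy => hR.symm hxy) fun ⟨hxR, hyR, hxy⟩ => ⟨hyR, hxR, hG.symm hxy⟩⟩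
  trans := by
    rintro x y z (rfl | ⟨hx, hy, hxy⟩) (rfl | ⟨hy', hz, hyz⟩)
    · exact Or.inl rfl
    · exact Or.inr ⟨hy', hz, hyz⟩
    · exact Or.inr ⟨hx, hy, hxy⟩
    refine Or.inr ⟨hx, hz, ?_⟩
    rcases hxy with hxy | ⟨hxR, hyR, hxy⟩ <;> rcases hyz with hyz | ⟨hyR', hzR, hyz⟩
    · exact Or.inl (hR.trans hxy hyz)
    · exact (hyR' (hR.right_mem hxy)).elim
    · exact (hyR (hR.left_mem hyz)).elim
    · exact Or.inr ⟨hxR, hzR, hG.trans hxy hyz⟩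

theorem IsFinPER.setOf_absorbRel_of_mem (hE : Equivalence E) (hρ : IsCocycle E ρ)
    (hR : IsFinPER E R) (hx : x ∈ absorbablePart E ρ G R) (hxR : x ∈ relDomain R) :
    {y | absorbRel E ρ G R h y x} = {y | R x y} := by
  ext y
  constructor
  · rintro (rfl | ⟨-, -, hyx | ⟨-, hxR', -⟩⟩)
    exacts [hxR, hR.symm hyx, (hxR' hxR).elim]
  · exact fun hxy => Or.inr
      ⟨eInvariant_absorbablePart hE hρ G R (hR.le hxy) hx, hx, Or.inl (hR.symm hxy)⟩

theorem IsAbsorption.subset_setOf_absorbRel (hE : Equivalence E) (hρ : IsCocycle E ρ)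
    (hG : IsFinPER E G) (hR : IsMaximalBalanced E ρ G R) (hh : IsAbsorption E ρ G R h)
    (hx : x ∈ absorbablePart E ρ G R) (hxR : x ∉ relDomain R) :
    {y | G (h x) y} ⊆ {y | absorbRel E ρ G R h y x} := by
  intro y hy
  have hyin : y ∈ leftoverInside G R :=
    hR.mem_leftoverInside hG (hh.mem_leftoverInside hx hxR) hy
  refine Or.inr ⟨eInvariant_absorbablePart hE hρ G R
    (hE.trans (hh.rel hE hx hxR) (hG.le hy)) hx, hx, Or.inr ⟨hyin.2, hxR, ?_⟩⟩
  rw [hh.eq_self y hyin.1]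
  exact hG.symm hy

theorem IsAbsorption.setOf_absorbRel_subset (hE : Equivalence E) (hG : IsFinPER E G)
    (hR : IsMaximalBalanced E ρ G R) (hh : IsAbsorption E ρ G R h)
    (hx : x ∈ absorbablePart E ρ G R) (hxR : x ∉ relDomain R) :
    {y | absorbRel E ρ G R h y x} ⊆
      {y | G (h x) y} ∪ {l | l ∈ absorbablePart E ρ G R ∧ IsBestFit E ρ G R l (h x)} := by
  have key : ∀ y ∈ absorbablePart E ρ G R, y ∉ relDomain R → G (h y) (h x) → y ∈
      {y | G (h x) y} ∪ {l | l ∈ absorbablePart E ρ G R ∧ IsBestFit E ρ G R l (h x)} := by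
    intro y hy hyR hyx
    refine (mem_leftover_or (G := G) hyR).imp (fun hin => ?_) fun hout => ?_
    · exact hh.eq_self y hin.1 ▸ hG.symm hyx
    · exact ⟨hy, (hh.isBestFit y hy hout).of_rel hE hG hR hyx⟩
  rintro y (rfl | ⟨hy, -, hyx | ⟨hyR, -, hyx⟩⟩)
  · exact key y hx hxR (hh.mem_leftoverInside hx hxR).1
  · exact (hxR (hR.isFinPER.right_mem hyx)).elim
  · exact key y hy hyR hyx

theorem IsAbsorption.finite_setOf_absorbRel (hE : Equivalence E) (hρ : IsCocycle E ρ)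
    (hG : IsFinPER E G) (hR : IsMaximalBalanced E ρ G R) (hh : IsAbsorption E ρ G R h) (x : X) :
    {y | absorbRel E ρ G R h y x}.Finite := by
  by_cases hx : x ∈ absorbablePart E ρ G R
  · by_cases hxR : x ∈ relDomain R
    · rw [hR.isFinPER.setOf_absorbRel_of_mem hE hρ hx hxR]
      exact hR.isFinPER.finite x
    · refine ((hG.finite (h x)).union ?_).subset (hh.setOf_absorbRel_subset hE hG hR hx hxR)
      refine not_infinite.1 fun hinf => ?_
      obtain ⟨l, hl, hbest⟩ := hinf.nonempty
      obtain ⟨q, hq, hlE, hlq⟩ := hR.exists_notMem_fittingPoints hE hρ hG hl hbest.2.1.2.1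
      exact hinf ((hR.finite_setOf_isBestFit hE hρ hG hbest hq hlE hlq).subset fun _ h => h.2)
  · exact (finite_singleton x).subset fun y hy => hy.resolve_right fun h => hx h.2.1

theorem IsAbsorption.eSize_setOf_absorbRel_le (hE : Equivalence E) (hρ : IsCocycle E ρ)
    (hG : IsFinPER E G) (hR : IsMaximalBalanced E ρ G R) (hh : IsAbsorption E ρ G R h)
    {A : Set X} {c : ℝ≥0∞} (hd : IsDenseIn ρ A G c) (hx : x ∈ absorbablePart E ρ G R) :
    eSize ρ {y | absorbRel E ρ G R h y x} x ≤
      3 * c * eSize ρ ({y | absorbRel E ρ G R h y x} ∩ A) x := by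
  by_cases hxR : x ∈ relDomain R
  · rw [hR.isFinPER.setOf_absorbRel_of_mem hE hρ hx hxR]
    exact hR.isDenseIn hE hρ hG hd x
  have hp := hh.mem_leftoverInside hx hxR
  have hxp := hh.rel hE hx hxR
  set F := {y | absorbRel E ρ G R h y x}
  have hpF : {y | G (h x) y} ⊆ F := hh.subset_setOf_absorbRel hE hρ hG hR hx hxR
  have hFE : ∀ y ∈ F, E y (h x) := fun y hy => by
    rcases hh.setOf_absorbRel_subset hE hG hR hx hxR hy with hy | hy
    exacts [hE.symm (hG.le hy), hE.symm hy.2.2.1.1]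
  refine hρ.eSize_le_mul_of_le hFE (fun y hy => hFE y hy.1) (hE.symm hxp) ?_
  calc eSize ρ F (h x)
      ≤ eSize ρ ({y | G (h x) y} ∪ fittingPoints E ρ G R (h x)) (h x) :=
        eSize_mono ρ ((hh.setOf_absorbRel_subset hE hG hR hx hxR).trans
          (union_subset_union_right _ fun y hy => hy.2.2.1)) _
    _ ≤ classSize ρ G (h x) (h x) + classSize ρ G (h x) (h x) :=
        (eSize_union_le ρ _ _ _).trans
          (add_le_add le_rfl (hR.eSize_fittingPoints_le hE hρ hG hp))
    _ = 2 * classSize ρ G (h x) (h x) := (two_mul _).symm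
    _ ≤ 3 * (c * eSize ρ ({y | G (h x) y} ∩ A) (h x)) := by
        gcongr
        exacts [by norm_num, hd (h x)]
    _ ≤ 3 * c * eSize ρ (F ∩ A) (h x) := by
        rw [← mul_assoc]
        gcongr
        exact eSize_mono ρ (inter_subset_inter_left A hpF) _

theorem IsMaximalBalanced.measurableSet_leftoverInside (hG : IsFinPER E G)
    (hR : IsMaximalBalanced E ρ G R) : MeasurableSet (leftoverInside G R) :=
  hG.measurableSet_relDomain.diff hR.isFinPER.measurableSet_relDomain

theorem IsMaximalBalanced.measurableSet_leftoverOutside (hG : IsFinPER E G)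
    (hR : IsMaximalBalanced E ρ G R) : MeasurableSet (leftoverOutside G R) :=
  hG.measurableSet_relDomain.compl.diff hR.isFinPER.measurableSet_relDomain

variable [StandardBorelSpace X] {g : ℕ → X → X}

theorem IsMaximalBalanced.measurable_mem_fittingPoints (hg : IsEnumeration E g)
    (hρ : IsCocycle E ρ) (hG : IsFinPER E G) (hR : IsMaximalBalanced E ρ G R) :
    Measurable fun a : X × X => a.2 ∈ fittingPoints E ρ G R a.1 := by
  have hsize : Measurable fun a : X × X => classSize ρ G a.1 a.2 :=
    hg.measurable_eSize hρ (H := fun (a : X × X) y => G a.1 y)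
      (hG.measurable.comp ((measurable_fst.comp measurable_fst).prodMk measurable_snd))
      measurable_fst measurable_snd fun _ _ h => hG.le h
  exact hg.measurable_rel.and (((hR.measurableSet_leftoverOutside hG).mem.comp measurable_snd).and
    (measurableSet_setOfPred.1 (measurableSet_le measurable_const hsize)))

theorem IsMaximalBalanced.measurable_isBestFit (hg : IsEnumeration E g) (hρ : IsCocycle E ρ)
    (hG : IsFinPER E G) (hR : IsMaximalBalanced E ρ G R) :
    Measurable fun a : X × X => IsBestFit E ρ G R a.1 a.2 := by
  have hin := (hR.measurableSet_leftoverInside hG).mem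
  have hfit := hR.measurable_mem_fittingPoints hg hρ hG
  have hsub : Measurable fun a : X × X =>
      fittingPoints E ρ G R a.1 ⊆ fittingPoints E ρ G R a.2 := by
    have heq (a : X × X) : fittingPoints E ρ G R a.1 ⊆ fittingPoints E ρ G R a.2 ↔ ∀ l,
        E a.1 l → l ∈ fittingPoints E ρ G R a.1 → l ∈ fittingPoints E ρ G R a.2 :=
      ⟨fun h l _ hl => h hl, fun h l hl => h l hl.1 hl⟩
    simp only [heq]
    exact hg.measurable_forall
      ((hfit.comp ((measurable_fst.comp measurable_fst).prodMk measurable_snd)).imp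
        (hfit.comp ((measurable_snd.comp measurable_fst).prodMk measurable_snd))) measurable_fst
  refine (hin.comp measurable_snd).and ((hfit.comp measurable_swap).and
    (hg.measurable_forall ((hin.comp measurable_snd).imp (.imp ?_ ?_)) measurable_fst))
  · exact hfit.comp (measurable_snd.prodMk (measurable_fst.comp measurable_fst))
  · exact hsub.comp ((measurable_snd.comp measurable_fst).prodMk measurable_snd)

theorem IsMaximalBalanced.measurableSet_smallLeftover (hg : IsEnumeration E g) (hρ : IsCocycle E ρ)
    (hG : IsFinPER E G) (hR : IsMaximalBalanced E ρ G R) : MeasurableSet (smallLeftover E ρ G R) :=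
  measurableSet_setOfPred.2 ((hR.measurableSet_leftoverOutside hG).mem.and (hg.measurable_forall
    (((hR.measurableSet_leftoverInside hG).mem.comp measurable_snd).imp
      ((hR.measurable_mem_fittingPoints hg hρ hG).comp measurable_swap)) measurable_id))

theorem IsMaximalBalanced.measurableSet_exceptionalPart (hg : IsEnumeration E g)
    (hρ : IsCocycle E ρ) (hG : IsFinPER E G) (hR : IsMaximalBalanced E ρ G R) :
    MeasurableSet (exceptionalPart E ρ G R) :=
  .union (measurableSet_finiteSizePart hg hρ (hR.measurableSet_leftoverInside hG))
    (measurableSet_finiteSizePart hg hρ (hR.measurableSet_smallLeftover hg hρ hG))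

theorem IsMaximalBalanced.measurableSet_absorbablePart (hg : IsEnumeration E g) (hρ : IsCocycle E ρ)
    (hG : IsFinPER E G) (hR : IsMaximalBalanced E ρ G R) :
    MeasurableSet (absorbablePart E ρ G R) :=
  .diff (measurableSet_setOfPred.2 (hg.measurable_exists
    ((hR.measurableSet_leftoverInside hG).mem.comp measurable_snd) measurable_id))
    (hR.measurableSet_exceptionalPart hg hρ hG)

theorem IsMaximalBalanced.exists_isAbsorption (hE : Equivalence E) (hg : IsEnumeration E g)
    (hρ : IsCocycle E ρ) (hG : IsFinPER E G) (hR : IsMaximalBalanced E ρ G R) :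
    ∃ h, Measurable h ∧ IsAbsorption E ρ G R h := by
  obtain ⟨h, hh, -, hbest⟩ :=
    hg.exists_measurable_selector_or_self hE (hR.measurable_isBestFit hg hρ hG)
  refine ⟨h, hh, fun x hx => ?_, fun l hl hlout => ?_⟩
  · exact ((hbest x).resolve_left fun hfit => hfit.2.1.2.1.1 hx).1
  · obtain ⟨p, hp, hlp⟩ := hR.exists_mem_fittingPoints hE hρ hG hl hlout
    obtain ⟨q, hq, hlE, hlq⟩ := hR.exists_notMem_fittingPoints hE hρ hG hl hlout
    obtain ⟨p', hp'⟩ := hR.exists_isBestFit hE hρ hG hp hlp hq hlE hlq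
    exact (hbest l).resolve_right fun hno => hno.2 p' (hE.symm hp'.2.1.1) hp'

theorem IsAbsorption.isFinSubequivOn (hE : Equivalence E) (hg : IsEnumeration E g)
    (hρ : IsCocycle E ρ) (hG : IsFinPER E G) (hR : IsMaximalBalanced E ρ G R)
    (hh : IsAbsorption E ρ G R h) (hmeas : Measurable h) :
    IsFinSubequivOn E (absorbablePart E ρ G R) (absorbRel E ρ G R h) := by
  have hequiv := absorbRel_equivalence (ρ := ρ) hG hR.isFinPER h
  have hpart := (hR.measurableSet_absorbablePart hg hρ hG).mem
  have hdom := hR.isFinPER.measurableSet_relDomain.mem.not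
  refine ⟨hequiv, measurableSet_setOfPred.2 ?_, ?_, fun x => ?_⟩
  · exact (measurable_fst.eq measurable_snd).or ((hpart.comp measurable_fst).and
      ((hpart.comp measurable_snd).and (hR.isFinPER.measurable.or ((hdom.comp measurable_fst).and
        ((hdom.comp measurable_snd).and (hG.measurable.comp
          ((hmeas.comp measurable_fst).prodMk (hmeas.comp measurable_snd))))))))
  · rintro x y (rfl | ⟨hx, hy, hxy | ⟨hxR, hyR, hxy⟩⟩)
    · exact Or.inl rfl
    · exact Or.inr ⟨hR.isFinPER.le hxy, hx, hy⟩
    · exact Or.inr ⟨hE.trans (hE.trans (hh.rel hE hx hxR) (hG.le hxy))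
        (hE.symm (hh.rel hE hy hyR)), hx, hy⟩
  · exact (hh.finite_setOf_absorbRel hE hρ hG hR x).subset fun y hy => hequiv.symm hy

end Absorption

/-! ### Density and the decomposition -/

theorem EInvariant.iUnion {E : X → X → Prop} {ι : Sort*} {B : ι → Set X}
    (hB : ∀ i, EInvariant E (B i)) : EInvariant E (⋃ i, B i) := fun _ _ hxy hx =>
  let ⟨i, hi⟩ := mem_iUnion.1 hx
  mem_iUnion.2 ⟨i, hB i hxy hi⟩

section Density

variable [MeasurableSpace X] {E G R : X → X → Prop} {ρ : X → X → ℝ} {A : Set X}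

theorem hasPosDensityOn_of_eSize_le (hE : Equivalence E) (hρ : IsCocycle E ρ) {W : Set X}
    {F : X → X → Prop} (hF : IsFinSubequivOn E W F) {c : ℝ≥0∞} (hc : c ≠ 0) (hc' : c ≠ ⊤)
    (hd : ∀ x ∈ W, eSize ρ {y | F y x} x ≤ c * eSize ρ (A ∩ {y | F y x}) x) :
    HasPosDensityOn E ρ A W := by
  refine ⟨c⁻¹.toReal, ENNReal.toReal_pos (ENNReal.inv_ne_zero.2 hc') (ENNReal.inv_ne_top.2 hc),
    F, hF, fun x hx => ?_⟩
  have hfin : {y | F y x}.Finite := (hF.2.2.2 x).subset fun y hy => hF.1.symm hy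
  have hne : eSize ρ {y | F y x} x ≠ 0 :=
    (hρ.eSize_pos (Y := {y | F y x}) (hF.1.refl x) (hE.refl x)).ne'
  rw [ENNReal.ofReal_toReal (ENNReal.inv_ne_top.2 hc), relSize,
    ENNReal.le_div_iff_mul_le (Or.inl hne) (Or.inl (eSize_ne_top ρ hfin x)),
    ENNReal.inv_mul_le_iff hc hc']
  exact hd x hx

theorem hasSigmaPosDensityOn_iUnion {W : ℕ → Set X} (hW : ∀ n, MeasurableSet (W n))
    (hinv : ∀ n, EInvariant E (W n)) (hd : ∀ n, HasPosDensityOn E ρ (A ∩ W n) (W n)) :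
    HasSigmaPosDensityOn E ρ (A ∩ ⋃ n, W n) (⋃ n, W n) := by
  refine ⟨W, hW, subset_iUnion W, fun n x hx y _ hxy => hinv n hxy hx, rfl, fun n => ?_⟩
  rw [inter_assoc, inter_eq_right.2 (subset_iUnion W n)]
  exact hd n

variable [StandardBorelSpace X] {g : ℕ → X → X}

theorem IsMaximalBalanced.hasPosDensityOn (hE : Equivalence E) (hg : IsEnumeration E g)
    (hρ : IsCocycle E ρ) (hG : IsFinPER E G) (hR : IsMaximalBalanced E ρ G R) {c : ℝ≥0∞}
    (hc : c ≠ 0) (hc' : c ≠ ⊤) (hd : IsDenseIn ρ A G c) :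
    HasPosDensityOn E ρ (A ∩ absorbablePart E ρ G R) (absorbablePart E ρ G R) := by
  obtain ⟨h, hmeas, hh⟩ := hR.exists_isAbsorption hE hg hρ hG
  have hF := hh.isFinSubequivOn hE hg hρ hG hR hmeas
  refine hasPosDensityOn_of_eSize_le hE hρ hF (c := 3 * c) (mul_ne_zero three_ne_zero hc)
    (ENNReal.mul_ne_top ofNat_ne_top hc') fun x hx => ?_
  have hsub : {y | absorbRel E ρ G R h y x} ⊆ absorbablePart E ρ G R := fun y hy =>
    (hF.2.2.1 hy).elim (fun hyx => hyx ▸ hx) fun hyx => hyx.2.1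
  rw [inter_assoc, inter_eq_right.2 hsub, inter_comm]
  exact hh.eSize_setOf_absorbRel_le hE hρ hG hR hd hx

end Density

/-- A sequence that starts with equality on `A` and in which the classes of each term form a maximal
disjoint family of balanced sets for the preceding term. -/
structure IsMaximalBalancedSeq [MeasurableSpace X] (E : X → X → Prop) (ρ : X → X → ℝ)
    (A : Set X) (G : ℕ → X → X → Prop) : Prop where
  zero : G 0 = fun x y => x = y ∧ x ∈ A
  succ : ∀ n, IsMaximalBalanced E ρ (G n) (G (n + 1))

section MaximalBalancedSeq

variable {E : X → X → Prop} {ρ : X → X → ℝ} {G : ℕ → X → X → Prop} {A : Set X} {g : ℕ → X → X}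

theorem exceptionalPart_union_absorbablePart_union_increasingPart :
    (⋃ n, exceptionalPart E ρ (G n) (G (n + 1))) ∪ (⋃ n, absorbablePart E ρ (G n) (G (n + 1))) ∪
      increasingPart E G = univ := by
  refine eq_univ_of_forall fun x => or_iff_not_imp_right.2 fun hx => ?_
  simp only [increasingPart, mem_ofPred_eq, not_forall] at hx
  obtain ⟨n, y, hxy, hy⟩ := hx
  by_cases hexc : x ∈ exceptionalPart E ρ (G n) (G (n + 1))
  · exact Or.inl (mem_iUnion.2 ⟨n, hexc⟩)
  · exact Or.inr (mem_iUnion.2 ⟨n, ⟨y, hxy, Classical.not_imp.1 (by simpa using hy)⟩, hexc⟩)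

variable [MeasurableSpace X] [StandardBorelSpace X]

theorem isFinPER_eq_on (hE : Equivalence E) (hA : MeasurableSet A) :
    IsFinPER E fun x y => x = y ∧ x ∈ A where
  measurable := (measurable_fst.eq measurable_snd).and (hA.mem.comp measurable_fst)
  symm := by
    rintro x _ ⟨rfl, hx⟩
    exact ⟨rfl, hx⟩
  trans := by
    rintro x _ _ ⟨rfl, -⟩ h
    exact h
  le := by
    rintro x _ ⟨rfl, -⟩
    exact hE.refl x
  finite x := (finite_singleton x).subset fun y hy => hy.1.symm

theorem exists_isMaximalBalancedSeq (hE : Equivalence E) (hg : IsEnumeration E g)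
    (hρ : IsCocycle E ρ) (hA : MeasurableSet A) : ∃ G, IsMaximalBalancedSeq E ρ A G := by
  choose next hnext using fun G : {G // IsFinPER E G} =>
    G.2.exists_isMaximalBalanced hE hg hρ
  let G (n : ℕ) : {G // IsFinPER E G} :=
    Nat.rec ⟨_, isFinPER_eq_on hE hA⟩ (fun _ G => ⟨next G, (hnext G).isFinPER⟩) n
  exact ⟨fun n => (G n).1, rfl, fun n => hnext (G n)⟩

namespace IsMaximalBalancedSeq

theorem isFinPER (hG : IsMaximalBalancedSeq E ρ A G) (hE : Equivalence E)
    (hA : MeasurableSet A) : ∀ n, IsFinPER E (G n)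
  | 0 => hG.zero ▸ isFinPER_eq_on hE hA
  | n + 1 => (hG.succ n).isFinPER

theorem isBalancedSeq (hG : IsMaximalBalancedSeq E ρ A G) (hE : Equivalence E)
    (hA : MeasurableSet A) : IsBalancedSeq E ρ G :=
  ⟨hG.isFinPER hE hA, fun n => (hG.succ n).isBalanced⟩

theorem isDenseIn (hG : IsMaximalBalancedSeq E ρ A G) (hE : Equivalence E)
    (hρ : IsCocycle E ρ) (hA : MeasurableSet A) (n : ℕ) : IsDenseIn ρ A (G n) (3 ^ n) := by
  induction n with
  | zero =>
    intro y
    rw [hG.zero, pow_zero, one_mul]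
    refine eSize_mono ρ ?_ y
    rintro _ ⟨rfl, hy⟩
    exact ⟨⟨rfl, hy⟩, hy⟩
  | succ n ih =>
    rw [pow_succ']
    exact (hG.succ n).isDenseIn hE hρ (hG.isFinPER hE hA n) ih

theorem smoothOn_exceptionalPart (hG : IsMaximalBalancedSeq E ρ A G) (hE : Equivalence E)
    (hg : IsEnumeration E g) (hρ : IsCocycle E ρ) (hA : MeasurableSet A) :
    SmoothOn E ρ (⋃ n, exceptionalPart E ρ (G n) (G (n + 1))) := by
  have hfin (n : ℕ) := hG.isFinPER hE hA n
  let V : ℕ ⊕ ℕ → Set X := Sum.elim (fun n => leftoverInside (G n) (G (n + 1)))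
    fun n => smallLeftover E ρ (G n) (G (n + 1))
  have hV : ∀ i, MeasurableSet (V i) := Sum.rec
    (fun n => (hG.succ n).measurableSet_leftoverInside (hfin n))
    fun n => (hG.succ n).measurableSet_smallLeftover hg hρ (hfin n)
  simpa only [iUnion_sum, ← iUnion_union_distrib] using! smoothOn_iUnion_finiteSizePart hE hg hρ hV

theorem hasSigmaPosDensityOn_absorbablePart (hG : IsMaximalBalancedSeq E ρ A G) (hE : Equivalence E)
    (hg : IsEnumeration E g) (hρ : IsCocycle E ρ) (hA : MeasurableSet A) :
    HasSigmaPosDensityOn E ρ (A ∩ ⋃ n, absorbablePart E ρ (G n) (G (n + 1)))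
      (⋃ n, absorbablePart E ρ (G n) (G (n + 1))) :=
  hasSigmaPosDensityOn_iUnion
    (fun n => (hG.succ n).measurableSet_absorbablePart hg hρ (hG.isFinPER hE hA n))
    (fun _ => eInvariant_absorbablePart hE hρ _ _)
    fun n => (hG.succ n).hasPosDensityOn hE hg hρ (hG.isFinPER hE hA n)
      (pow_ne_zero n three_ne_zero) (ENNReal.pow_ne_top ofNat_ne_top) (hG.isDenseIn hE hρ hA n)

end IsMaximalBalancedSeq

end MaximalBalancedSeq

/-- `X` decomposes into an `E`-invariant Borel set on which `ρ` is smooth, one on which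
`A` has σ-positive `ρ`-density, and one admitting a finite-to-one Borel compression of the
quotient of (the restriction of) `ρ` by a finite Borel subequivalence relation. -/
theorem stmt2 [MeasurableSpace X] [StandardBorelSpace X]
    (E : X → X → Prop) (hE : IsCBER E)
    (ρ : X → X → ℝ) (hρ : IsCocycle E ρ)
    (A : Set X) (hA : MeasurableSet A) (hAcomp : ∀ x : X, ∃ y ∈ A, E x y) :
    ∃ B C D : Set X,
      MeasurableSet B ∧ EInvariant E B ∧
      MeasurableSet C ∧ EInvariant E C ∧
      MeasurableSet D ∧ EInvariant E D ∧
      B ∪ C ∪ D = Set.univ ∧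
      SmoothOn E ρ B ∧
      HasSigmaPosDensityOn E ρ (A ∩ C) C ∧
      (∃ (F : X → X → Prop) (hF : Equivalence F), IsFinSubequivOn E D F ∧
        ∃ φ : Quotient (Setoid.mk F hF) → Quotient (Setoid.mk F hF),
          Measurable φ ∧ (∀ C', (φ ⁻¹' {C'}).Finite) ∧
          QuotCompressionOn E ρ D (Setoid.mk F hF) φ) := by
  obtain ⟨g, hg⟩ := hE.exists_isEnumeration
  obtain ⟨G, hG⟩ := exists_isMaximalBalancedSeq hE.1 hg hρ hA
  have hfin := hG.isFinPER hE.1 hA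
  have hbal := hG.isBalancedSeq hE.1 hA
  refine ⟨⋃ n, exceptionalPart E ρ (G n) (G (n + 1)),
    ⋃ n, absorbablePart E ρ (G n) (G (n + 1)), increasingPart E G,
    .iUnion fun n => (hG.succ n).measurableSet_exceptionalPart hg hρ (hfin n),
    .iUnion fun n => eInvariant_exceptionalPart hE.1 hρ (G n) (G (n + 1)),
    .iUnion fun n => (hG.succ n).measurableSet_absorbablePart hg hρ (hfin n),
    .iUnion fun n => eInvariant_absorbablePart hE.1 hρ (G n) (G (n + 1)),
    hbal.measurableSet_increasingPart hg, eInvariant_increasingPart hE.1,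
    exceptionalPart_union_absorbablePart_union_increasingPart,
    hG.smoothOn_exceptionalPart hE.1 hg hρ hA,
    hG.hasSigmaPosDensityOn_absorbablePart hE.1 hg hρ hA,
    hbal.exists_compression hE.1 hg hρ fun x => ?_⟩
  obtain ⟨y, hy, hxy⟩ := hAcomp x
  exact ⟨y, hG.zero ▸ ⟨rfl, hy⟩, hxy⟩

end CocycleNadkarni
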